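/- arXiv:1506.06688 — 2 statements merged into one kernel-verified Lean document; each statement's English description precedes it below -/
import Mathlib

section
/- For every real number γ ≥ 2 + √5 and every ε > 0, there exists a matrix M with entries in {0, 1, −1} such that the growth rate gr(Grid(M)) = lim_{n→∞} |Grid_n(M)|^{1/n} exists and |gr(Grid(M)) − γ| < ε. -/
noncomputable section

open Filter

open scoped Classical

/-- The point `p` (0-based) of the permutation `σ` lies in the cell `(i, j)` of the gridding
determined by the column dividers `c` and row dividers `r`. -/
def InCell {t u k : ℕ} (σ : Equiv.Perm (Fin k)) (c : Fin (t + 1) → ℕ) (r : Fin (u + 1) → ℕ)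
    (i : Fin t) (j : Fin u) (p : Fin k) : Prop :=
  c i.castSucc ≤ (p : ℕ) ∧ (p : ℕ) < c i.succ ∧
    r j.castSucc ≤ (σ p : ℕ) ∧ (σ p : ℕ) < r j.succ

/-- `c`, `r` form an `M`-gridding of the permutation `σ`. -/
def IsGridding {t u k : ℕ} (M : Fin t → Fin u → ℤ) (σ : Equiv.Perm (Fin k))
    (c : Fin (t + 1) → ℕ) (r : Fin (u + 1) → ℕ) : Prop :=
  Monotone c ∧ Monotone r ∧ c 0 = 0 ∧ c (Fin.last t) = k ∧ r 0 = 0 ∧ r (Fin.last u) = k ∧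
    ∀ (i : Fin t) (j : Fin u),
      (M i j = 0 → ∀ p : Fin k, ¬ InCell σ c r i j p) ∧
        (M i j = 1 → ∀ p q : Fin k, InCell σ c r i j p → InCell σ c r i j q →
          p < q → σ p < σ q) ∧
          (M i j = -1 → ∀ p q : Fin k, InCell σ c r i j p → InCell σ c r i j q →
            p < q → σ q < σ p)

/-- Membership in the monotone grid class `Grid(M)`. -/
def InGridClass {t u : ℕ} (M : Fin t → Fin u → ℤ) {k : ℕ} (σ : Equiv.Perm (Fin k)) : Prop :=
  ∃ (c : Fin (t + 1) → ℕ) (r : Fin (u + 1) → ℕ), IsGridding M σ c r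

/-- `|Grid_n(M)|`, the number of permutations of length `n` in the grid class of `M`. -/
def gridCount {t u : ℕ} (M : Fin t → Fin u → ℤ) (n : ℕ) : ℕ :=
  Nat.card {σ : Equiv.Perm (Fin n) // InGridClass M σ}

/-!
It suffices to use `0/1` matrices. Up to a polynomial factor, `|Grid_n(M)|` counts gridded
permutations; those with `a e` points in every cell `e` correspond to a way of interleaving the
cells of each column and of each row, so their number `w a` is a product of multinomial coefficients
over the vertices of the row-column graph, whose edges are the cells. Since
`w a * w b ≤ w (a + b)`, Fekete's lemma shows that the growth rate exists, and it is the reciprocal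
of the radius of convergence of `∑ w(a) z^|a|`.

If the row-column graph is a caterpillar with `N i` leaves at the `i`-th vertex of its spine, this
series is the product of the partial continued fractions `T 0 = 1`,
`T (i + 1) = 1 / (1 - z (N i + T i))`. Given `2 + √5 ≤ γ < Γ`, choosing each `N i` greedily as large
as possible keeps all `T i` positive and bounded at `z = 1 / Γ`, while the larger value `z = 1 / γ`
pushes some `T i` past its pole. Hence a finite caterpillar has growth rate in `[γ, Γ]`.
-/

section Fiber

variable {α β ι κ : Type*}

theorem multinomial_disjSum (s : Finset α) (t : Finset β) (a : α → ℕ) (b : β → ℕ) :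
    Nat.multinomial (s.disjSum t) (Sum.elim a b) =
      (∑ x ∈ s, a x + ∑ y ∈ t, b y).choose (∑ y ∈ t, b y) *
        (Nat.multinomial s a * Nat.multinomial t b) := by
  have hpos : 0 < (∏ x ∈ s, (a x).factorial) * ∏ y ∈ t, (b y).factorial :=
    Nat.mul_pos (Finset.prod_pos fun _ _ => Nat.factorial_pos _)
      (Finset.prod_pos fun _ _ => Nat.factorial_pos _)
  refine Nat.eq_of_mul_eq_mul_left hpos ?_
  calc ((∏ x ∈ s, (a x).factorial) * ∏ y ∈ t, (b y).factorial) *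
        Nat.multinomial (s.disjSum t) (Sum.elim a b)
      = (∑ x ∈ s, a x + ∑ y ∈ t, b y).factorial := by
        simpa [Finset.prod_disjSum, Finset.sum_disjSum] using
          Nat.multinomial_spec (s.disjSum t) (Sum.elim a b)
    _ = (∑ x ∈ s, a x + ∑ y ∈ t, b y).choose (∑ y ∈ t, b y) *
          (∑ x ∈ s, a x).factorial * (∑ y ∈ t, b y).factorial :=
        (Nat.add_choose_mul_factorial_mul_factorial _ _).symm
    _ = _ := by
        rw [← Nat.multinomial_spec s a, ← Nat.multinomial_spec t b]
        ring

theorem multinomial_mul_le (s : Finset α) (a b : α → ℕ) :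
    Nat.multinomial s a * Nat.multinomial s b ≤ Nat.multinomial s (a + b) := by
  induction s using Finset.induction_on with
  | empty => simp
  | insert x s hx ih =>
    have vandermonde : (a x + ∑ i ∈ s, a i).choose (a x) * (b x + ∑ i ∈ s, b i).choose (b x) ≤
        ((a + b) x + ∑ i ∈ s, (a + b) i).choose ((a + b) x) := by
      have hsum : (a + b) x + ∑ i ∈ s, (a + b) i =
          (a x + ∑ i ∈ s, a i) + (b x + ∑ i ∈ s, b i) := by
        simp only [Pi.add_apply, Finset.sum_add_distrib]
        ring
      rw [hsum, Nat.add_choose_eq (a x + ∑ i ∈ s, a i)]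
      exact Finset.single_le_sum (a := (a x, b x)) (f := fun ij : ℕ × ℕ =>
        (a x + ∑ i ∈ s, a i).choose ij.1 * (b x + ∑ i ∈ s, b i).choose ij.2)
        (fun _ _ => Nat.zero_le _) (Finset.HasAntidiagonal.mem_antidiagonal.mpr rfl)
    simp only [Nat.multinomial_insert hx]
    rw [mul_mul_mul_comm]
    exact Nat.mul_le_mul vandermonde ih

variable [Fintype α] [Fintype β]

/-- The fibre of `f` over `i`, as a finite set. The decidability instance is the classical one for
every `ι`, so that all fibres are comparable. -/
def fiber (f : α → ι) (i : ι) : Finset α :=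
  @Finset.filter α (fun x => f x = i) (fun _ => Classical.propDecidable _) Finset.univ

@[simp]
theorem mem_fiber {f : α → ι} {i : ι} {x : α} : x ∈ fiber f i ↔ f x = i := by
  simp [fiber]

/-- The total of the counts `a` on the fibre of `f` over `i`. -/
def fiberSum (f : α → ι) (a : α → ℕ) (i : ι) : ℕ :=
  ∑ x ∈ fiber f i, a x

theorem fiberSum_eq_zero {f : α → ι} {i : ι} (hi : ∀ x, f x ≠ i) (a : α → ℕ) :
    fiberSum f a i = 0 := by
  simp [fiberSum, fiber, hi]

theorem fiberSum_of_injective {f : α → ι} (hf : f.Injective) (a : α → ℕ) (x : α) :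
    fiberSum f a (f x) = a x := by
  have hfiber : fiber f (f x) = {x} := by ext y; simp [hf.eq_iff]
  simp [fiberSum, hfiber]

theorem sum_fiberSum [Fintype ι] (f : α → ι) (a : α → ℕ) : ∑ i, fiberSum f a i = ∑ x, a x := by
  simp only [fiberSum, fiber]
  convert Finset.sum_fiberwise Finset.univ f a

theorem fiber_sumElim (f : α → ι) (g : β → ι) (i : ι) :
    fiber (Sum.elim f g) i = (fiber f i).disjSum (fiber g i) := by
  ext x
  cases x <;> simp

variable [Fintype ι] [Fintype κ]

/-- The product over `i` of the multinomial coefficients of the counts `a` on the fibres of `f`: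
the number of families of words, one for each `i`, where the `i`-th word contains every letter `x`
of the fibre over `i` exactly `a x` times. -/
def fiberMultinomial (f : α → ι) (a : α → ℕ) : ℕ :=
  ∏ i, Nat.multinomial (fiber f i) a

theorem fiberMultinomial_pos (f : α → ι) (a : α → ℕ) : 0 < fiberMultinomial f a :=
  Finset.prod_pos fun _ _ => Nat.multinomial_pos _ _

theorem fiberMultinomial_mul_le (f : α → ι) (a b : α → ℕ) :
    fiberMultinomial f a * fiberMultinomial f b ≤ fiberMultinomial f (a + b) := by
  simp only [fiberMultinomial, ← Finset.prod_mul_distrib]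
  exact Finset.prod_le_prod' fun _ _ => multinomial_mul_le _ _ _

theorem fiberMultinomial_comp_of_injective {φ : ι → κ} (hφ : φ.Injective) (f : α → ι)
    (a : α → ℕ) : fiberMultinomial (φ ∘ f) a = fiberMultinomial f a := by
  refine (Fintype.prod_of_injective φ hφ _ _ (fun k hk => ?_) fun i => ?_).symm
  · have hempty : fiber (φ ∘ f) k = ∅ := by
      ext x
      simpa using fun h => hk ⟨f x, h⟩
    rw [hempty, Nat.multinomial_empty]
  · congr 1
    ext x
    simp [hφ.eq_iff]

theorem fiberMultinomial_of_injective {f : α → ι} (hf : f.Injective) (a : α → ℕ) :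
    fiberMultinomial f a = 1 := by
  have hid : fiberMultinomial (id : α → α) a = 1 :=
    Finset.prod_eq_one fun x _ => by
      have hfiber : fiber (id : α → α) x = {x} := by ext; simp
      rw [hfiber, Nat.multinomial_singleton]
  rw [← hid, ← fiberMultinomial_comp_of_injective hf]
  rfl

theorem fiberMultinomial_const (i : ι) (a : α → ℕ) :
    fiberMultinomial (fun _ => i) a = Nat.multinomial Finset.univ a := by
  have hfiber (j : ι) : fiber (fun _ : α => i) j = if j = i then Finset.univ else ∅ := by
    ext x
    by_cases hj : i = j <;> simp [hj, eq_comm (a := j)]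
  rw [fiberMultinomial, Finset.prod_eq_single i (fun j _ hj => by simp [hfiber, hj]) (by simp)]
  simp [hfiber]

theorem fiberMultinomial_sumElim (f : α → ι) (g : β → ι) (a : α → ℕ) (b : β → ℕ) :
    fiberMultinomial (Sum.elim f g) (Sum.elim a b) =
      (∏ i, (fiberSum f a i + fiberSum g b i).choose (fiberSum g b i)) *
        (fiberMultinomial f a * fiberMultinomial g b) := by
  simp only [fiberMultinomial, fiber_sumElim, multinomial_disjSum, Finset.prod_mul_distrib]
  rfl

end Fiber

section CellWeight

variable {E I J : Type*} [Fintype E] [Fintype I] [Fintype J] (col : E → I) (row : E → J)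

/-- For a set of cells `E`, the cell `e` lying in column `col e` and row `row e`, this is the number
of gridded permutations with `a e` points in every cell `e`, all cells being increasing: each column
and each row independently contributes an interleaving of its cells. -/
def cellWeight (a : E → ℕ) : ℕ :=
  fiberMultinomial col a * fiberMultinomial row a

theorem cellWeight_pos (a : E → ℕ) : 0 < cellWeight col row a :=
  Nat.mul_pos (fiberMultinomial_pos _ _) (fiberMultinomial_pos _ _)

theorem cellWeight_mul_le (a b : E → ℕ) :
    cellWeight col row a * cellWeight col row b ≤ cellWeight col row (a + b) := by
  simp only [cellWeight]
  rw [mul_mul_mul_comm]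
  exact Nat.mul_le_mul (fiberMultinomial_mul_le _ _ _) (fiberMultinomial_mul_le _ _ _)

end CellWeight

section SortedWords

variable {E I P Q : Type*} [Fintype P] [Fintype Q]

theorem card_fiber_comp_equiv (F : Q → E) (ψ : P ≃ Q) (e : E) :
    (fiber (F ∘ ψ) e).card = (fiber F e).card :=
  Finset.card_equiv ψ (by simp)

theorem exists_equiv_comp_eq {F : P → E} {G : Q → E}
    (h : ∀ e, (fiber F e).card = (fiber G e).card) : ∃ ψ : P ≃ Q, G ∘ ψ = F := by
  have fiberEquiv (e : E) : Nonempty ({p // F p = e} ≃ {q // G q = e}) := by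
    simpa [← Fintype.card_eq, Fintype.card_subtype, fiber] using h e
  refine ⟨(Equiv.sigmaFiberEquiv F).symm.trans
    ((Equiv.sigmaCongrRight fun e => (fiberEquiv e).some).trans (Equiv.sigmaFiberEquiv G)), ?_⟩
  ext p
  exact ((fiberEquiv (F p)).some ⟨p, rfl⟩).2

variable [Fintype E]

theorem card_fiber_comp (col : E → I) (F : P → E) (i : I) :
    (fiber (col ∘ F) i).card = fiberSum col (fun e => (fiber F e).card) i := by
  rw [Finset.card_eq_sum_card_fiberwise (f := F) (t := fiber col i) (fun p => by simp)]
  refine Finset.sum_congr rfl fun e he => congrArg Finset.card ?_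
  ext p
  simp only [mem_fiber, Function.comp_apply, Finset.mem_filter] at he ⊢
  exact ⟨And.right, fun hp => ⟨hp ▸ he, hp⟩⟩

theorem exists_card_fiber_eq {n : ℕ} {a : E → ℕ} (ha : ∑ e, a e = n) :
    ∃ F : Fin n → E, ∀ e, (fiber F e).card = a e := by
  let letters : Fin n ≃ Σ e, Fin (a e) := (Fintype.equivFinOfCardEq (by simp [ha])).symm
  refine ⟨Sigma.fst ∘ letters, fun e => ?_⟩
  rw [card_fiber_comp_equiv, ← Fintype.card_fin (a e), ← Finset.card_univ]
  exact (Finset.card_nbij (Sigma.mk e) (by simp) sigma_mk_injective.injOn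
    fun x hx => by
    obtain ⟨e', x⟩ := x
    obtain rfl : e' = e := by simpa using hx
    exact ⟨x, by simp, rfl⟩).symm

theorem card_perm_comp_eq_self [DecidableEq P] [DecidableEq E] (F : P → E) :
    (Finset.univ.filter fun ψ : Equiv.Perm P => F ∘ ψ = F).card =
      ∏ e, (fiber F e).card.factorial := by
  rw [← Fintype.card_subtype]
  convert DomMulAct.stabilizer_card F
  rw [Fintype.card_subtype]
  congr
  ext
  simp

theorem card_perm_comp_eq [DecidableEq P] [DecidableEq E] {F G : P → E}
    (h : ∀ e, (fiber F e).card = (fiber G e).card) :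
    (Finset.univ.filter fun ψ : Equiv.Perm P => G ∘ ψ = F).card =
      ∏ e, (fiber F e).card.factorial := by
  obtain ⟨ψ₀, rfl⟩ := exists_equiv_comp_eq h
  rw [← card_perm_comp_eq_self]
  exact (Finset.card_equiv (Equiv.mulLeft ψ₀) fun χ => by
    simp [Function.comp_assoc, Equiv.Perm.coe_mul]).symm

variable [LinearOrder I]

/-- The words of length `n` over the alphabet `E` whose letters come in the order of their labels
under `col` and in which each letter `e` occurs `a e` times. -/
def sortedWords (col : E → I) (a : E → ℕ) (n : ℕ) : Finset (Fin n → E) :=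
  Finset.univ.filter fun F => Monotone (col ∘ F) ∧ ∀ e, (fiber F e).card = a e

theorem mem_sortedWords {col : E → I} {a : E → ℕ} {n : ℕ} {F : Fin n → E} :
    F ∈ sortedWords col a n ↔ Monotone (col ∘ F) ∧ ∀ e, (fiber F e).card = a e := by
  simp [sortedWords]

theorem sortedWords_nonempty (col : E → I) {a : E → ℕ} {n : ℕ} (ha : ∑ e, a e = n) :
    (sortedWords col a n).Nonempty := by
  obtain ⟨F, hF⟩ := exists_card_fiber_eq ha
  refine ⟨F ∘ Tuple.sort (col ∘ F),
    mem_sortedWords.mpr ⟨Tuple.monotone_sort (col ∘ F), fun e => ?_⟩⟩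
  rw [card_fiber_comp_equiv, hF]

theorem comp_mem_sortedWords_iff {col : E → I} {a : E → ℕ} {n : ℕ} {F : Fin n → E}
    (hF : F ∈ sortedWords col a n) (ψ : Equiv.Perm (Fin n)) :
    F ∘ ψ ∈ sortedWords col a n ↔ (col ∘ F) ∘ ψ = col ∘ F := by
  obtain ⟨hmono, hcard⟩ := mem_sortedWords.mp hF
  simp only [mem_sortedWords, card_fiber_comp_equiv, hcard, implies_true, and_true]
  exact ⟨fun h => Tuple.unique_monotone (τ := 1) h hmono,
    fun h => by rwa [← Function.comp_assoc, h]⟩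

theorem comp_eq_of_mem_sortedWords {col : E → I} {a : E → ℕ} {n : ℕ} {F G : Fin n → E}
    (hF : F ∈ sortedWords col a n) (hG : G ∈ sortedWords col a n) : col ∘ F = col ∘ G := by
  obtain ⟨ψ, rfl⟩ := exists_equiv_comp_eq fun e =>
    ((mem_sortedWords.mp hF).2 e).trans ((mem_sortedWords.mp hG).2 e).symm
  rw [← Function.comp_assoc, (comp_mem_sortedWords_iff hG ψ).mp hF]

theorem card_sortedWords_mul_prod_factorial [Fintype I] (col : E → I) {a : E → ℕ} {n : ℕ}
    (ha : ∑ e, a e = n) :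
    (sortedWords col a n).card * ∏ e, (a e).factorial = ∏ i, (fiberSum col a i).factorial := by
  obtain ⟨F, hF⟩ := sortedWords_nonempty col ha
  have hcard := (mem_sortedWords.mp hF).2
  calc (sortedWords col a n).card * ∏ e, (a e).factorial
      = ∑ G ∈ sortedWords col a n,
          (Finset.univ.filter fun ψ : Equiv.Perm (Fin n) => F ∘ ψ = G).card := by
        refine (Finset.sum_const_nat fun G hG => ?_).symm
        have hG := (mem_sortedWords.mp hG).2
        rw [card_perm_comp_eq fun e => (hG e).trans (hcard e).symm]
        simp only [hG]
    _ = (Finset.univ.filter fun ψ : Equiv.Perm (Fin n) => (col ∘ F) ∘ ψ = col ∘ F).card := by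
        simp only [← comp_mem_sortedWords_iff hF]
        rw [Finset.card_eq_sum_card_fiberwise (f := fun ψ : Equiv.Perm (Fin n) => F ∘ ψ)
          (t := sortedWords col a n) fun ψ => by simp]
        refine Finset.sum_congr rfl fun G hG => congrArg Finset.card ?_
        ext ψ
        simp only [Finset.mem_filter, Finset.mem_univ, true_and]
        exact ⟨fun h => ⟨h ▸ hG, h⟩, And.right⟩
    _ = ∏ i, (fiberSum col a i).factorial := by
        rw [card_perm_comp_eq_self]
        simp only [card_fiber_comp, hcard]

theorem card_sortedWords [Fintype I] (col : E → I) {a : E → ℕ} {n : ℕ} (ha : ∑ e, a e = n) :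
    (sortedWords col a n).card = fiberMultinomial col a := by
  refine Nat.eq_of_mul_eq_mul_right (Finset.prod_pos fun e _ => Nat.factorial_pos (a e))
    ((card_sortedWords_mul_prod_factorial col ha).trans ?_)
  calc ∏ i, (fiberSum col a i).factorial
      = (∏ i, ∏ e ∈ fiber col i, (a e).factorial) * fiberMultinomial col a := by
        simp only [fiberMultinomial, ← Finset.prod_mul_distrib, Nat.multinomial_spec]
        rfl
    _ = fiberMultinomial col a * ∏ e, (a e).factorial := by
        rw [mul_comm]
        congr 1
        simp only [fiber]
        convert Finset.prod_fiberwise Finset.univ col fun e => (a e).factorial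

end SortedWords

section Dividers

variable {t n : ℕ}

/-- The dividers `c` cut the positions `0, …, n - 1` into `t` consecutive blocks, and `π` maps each
position to the index of its block. -/
def IsBlockMap (c : Fin (t + 1) → ℕ) (π : Fin n → Fin t) : Prop :=
  ∀ (p : Fin n) (i : Fin t), (c i.castSucc ≤ (p : ℕ) ∧ (p : ℕ) < c i.succ) ↔ π p = i

theorem exists_isBlockMap {c : Fin (t + 1) → ℕ} (hc : Monotone c) (h0 : c 0 = 0)
    (hlast : c (Fin.last t) = n) : ∃ π : Fin n → Fin t, Monotone π ∧ IsBlockMap c π := by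
  have block (p : Fin n) : ∃ i : Fin t, c i.castSucc ≤ (p : ℕ) ∧ (p : ℕ) < c i.succ := by
    by_contra! h
    have hle (i : Fin (t + 1)) : c i ≤ (p : ℕ) :=
      Fin.induction (by simp [h0]) (fun i hi => h i hi) i
    exact absurd (hle (Fin.last t)) (by simp [hlast])
  choose π hπ using block
  have le_of_le {p q : Fin n} {i : Fin t} (hpq : p ≤ q) (hi : c i.castSucc ≤ (p : ℕ)) :
      i ≤ π q := by
    by_contra! h
    have : c (π q).succ ≤ c i.castSucc := hc (Fin.succ_le_castSucc_iff.mpr h)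
    have := (hπ q).2
    have : (p : ℕ) ≤ q := hpq
    omega
  refine ⟨π, fun p q hpq => le_of_le hpq (hπ p).1, fun p i => ⟨fun hi => ?_, fun hi => hi ▸ hπ p⟩⟩
  refine le_antisymm ?_ (le_of_le le_rfl hi.1)
  by_contra! h
  have : c i.succ ≤ c (π p).castSucc := hc (Fin.succ_le_castSucc_iff.mpr h)
  have := (hπ p).1
  omega

theorem exists_dividers {π : Fin n → Fin t} (hπ : Monotone π) :
    ∃ c : Fin (t + 1) → ℕ, Monotone c ∧ c 0 = 0 ∧ c (Fin.last t) = n ∧ IsBlockMap c π := by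
  let below (j : Fin (t + 1)) : Finset (Fin n) :=
    Finset.univ.filter fun p => (π p).castSucc < j
  have lt_card_iff (p : Fin n) (j : Fin (t + 1)) :
      (p : ℕ) < (below j).card ↔ (π p).castSucc < j := by
    refine ⟨fun h => ?_, fun h => ?_⟩
    · by_contra! hj
      have hsub : below j ⊆ Finset.Iio p := fun q hq => by
        have hq : (π q).castSucc < j := by simpa [below] using hq
        refine Finset.mem_Iio.mpr (lt_of_not_ge fun hpq => ?_)
        exact absurd (hj.trans (Fin.castSucc_le_castSucc_iff.mpr (hπ hpq))) hq.not_ge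
      simpa using h.trans_le (Finset.card_le_card hsub)
    · have hsub : Finset.Iic p ⊆ below j := fun q hq => by
        have hq : π q ≤ π p := hπ (Finset.mem_Iic.mp hq)
        simpa [below] using (Fin.castSucc_le_castSucc_iff.mpr hq).trans_lt h
      simpa [Nat.succ_le_iff] using Finset.card_le_card hsub
  refine ⟨fun j => (below j).card, fun j j' hj => Finset.card_le_card fun p hp => ?_, ?_, ?_,
    fun p i => ?_⟩
  · simp only [below, Finset.mem_filter_univ] at hp ⊢
    exact hp.trans_le hj
  · simp [below]
  · simp [below, Fin.castSucc_lt_last]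
  · rw [← not_lt, lt_card_iff, lt_card_iff, Fin.castSucc_lt_castSucc_iff,
      Fin.castSucc_lt_succ_iff, not_lt, eq_comm (b := i), le_antisymm_iff]

end Dividers

section CellMatrix

variable {E : Type*} {t u n : ℕ} {col : E → Fin t} {row : E → Fin u}

/-- The `0/1` matrix whose nonzero entries are the positions `(col e, row e)` of the cells `e`. -/
def cellMatrix (col : E → Fin t) (row : E → Fin u) (i : Fin t) (j : Fin u) : ℤ :=
  if ∃ e, col e = i ∧ row e = j then 1 else 0

theorem cellMatrix_eq_one_iff {i : Fin t} {j : Fin u} :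
    cellMatrix col row i j = 1 ↔ ∃ e, col e = i ∧ row e = j := by
  simp [cellMatrix]

theorem cellMatrix_eq_zero_or_eq_one (i : Fin t) (j : Fin u) :
    cellMatrix col row i j = 0 ∨ cellMatrix col row i j = 1 := by
  rw [cellMatrix]
  split_ifs <;> simp

theorem inCell_iff {σ : Equiv.Perm (Fin n)} {c : Fin (t + 1) → ℕ} {r : Fin (u + 1) → ℕ}
    {π : Fin n → Fin t} {ρ : Fin n → Fin u} (hπ : IsBlockMap c π) (hρ : IsBlockMap r ρ)
    {i : Fin t} {j : Fin u} {p : Fin n} : InCell σ c r i j p ↔ π p = i ∧ ρ (σ p) = j := by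
  rw [← hπ p i, ← hρ (σ p) j, InCell, and_assoc]

/-- A gridding of `σ` by increasing cells, recorded as the map `H` sending each position to the cell
of the corresponding point. -/
structure IsCellLabelling (col : E → Fin t) (row : E → Fin u) (σ : Equiv.Perm (Fin n))
    (H : Fin n → E) : Prop where
  monotone_col : Monotone (col ∘ H)
  monotone_row : Monotone (row ∘ H ∘ σ.symm)
  increasing : ∀ ⦃p q⦄, H p = H q → p < q → σ p < σ q

theorem InGridClass.exists_isCellLabelling {σ : Equiv.Perm (Fin n)}
    (h : InGridClass (cellMatrix col row) σ) : ∃ H, IsCellLabelling col row σ H := by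
  obtain ⟨c, r, hc, hr, hc0, hcn, hr0, hrn, hcells⟩ := h
  obtain ⟨π, hπ, hcπ⟩ := exists_isBlockMap hc hc0 hcn
  obtain ⟨ρ, hρ, hrρ⟩ := exists_isBlockMap hr hr0 hrn
  have exists_cell (p : Fin n) : ∃ e, col e = π p ∧ row e = ρ (σ p) := by
    refine cellMatrix_eq_one_iff.mp ((cellMatrix_eq_zero_or_eq_one _ _).resolve_left fun h0 => ?_)
    exact (hcells _ _).1 h0 p ((inCell_iff hcπ hrρ).mpr ⟨rfl, rfl⟩)
  choose H hcol hrow using exists_cell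
  refine ⟨H, fun p q hpq => ?_, fun p q hpq => ?_, fun p q hH hpq => ?_⟩
  · simpa [hcol] using hπ hpq
  · simpa [hrow] using hρ hpq
  · refine (hcells (π p) (ρ (σ p))).2.1 (cellMatrix_eq_one_iff.mpr ⟨H p, hcol p, hrow p⟩) p q
      ((inCell_iff hcπ hrρ).mpr ⟨rfl, rfl⟩) ((inCell_iff hcπ hrρ).mpr ⟨?_, ?_⟩) hpq
    · rw [← hcol, ← hcol, hH]
    · rw [← hrow, ← hrow, hH]

theorem IsCellLabelling.inGridClass (hinj : Function.Injective fun e => (col e, row e))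
    {σ : Equiv.Perm (Fin n)} {H : Fin n → E} (hH : IsCellLabelling col row σ H) :
    InGridClass (cellMatrix col row) σ := by
  obtain ⟨c, hc, hc0, hcn, hcπ⟩ := exists_dividers hH.monotone_col
  obtain ⟨r, hr, hr0, hrn, hrρ⟩ := exists_dividers hH.monotone_row
  refine ⟨c, r, hc, hr, hc0, hcn, hr0, hrn, fun i j => ⟨fun h0 p hp => ?_, fun _ p q hp hq => ?_,
    fun h => ?_⟩⟩
  · have hcell : col (H p) = i ∧ row (H p) = j := by simpa using (inCell_iff hcπ hrρ).mp hp
    exact zero_ne_one (h0.symm.trans (cellMatrix_eq_one_iff.mpr ⟨H p, hcell⟩))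
  · have hp : col (H p) = i ∧ row (H p) = j := by simpa using (inCell_iff hcπ hrρ).mp hp
    have hq : col (H q) = i ∧ row (H q) = j := by simpa using (inCell_iff hcπ hrρ).mp hq
    exact hH.increasing <| hinj <| Prod.ext (hp.1.trans hq.1.symm) (hp.2.trans hq.2.symm)
  · have := cellMatrix_eq_zero_or_eq_one (col := col) (row := row) i j
    omega

end CellMatrix

section Standardization

variable {E P Q : Type*} [LinearOrder P] [LinearOrder Q]

theorem exists_equiv_strictMono_on_fibers [Fintype P] [Fintype Q] {H : P → E} {V : Q → E}
    (h : ∀ e, (fiber H e).card = (fiber V e).card) :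
    ∃ σ : P ≃ Q, V ∘ σ = H ∧ ∀ ⦃p q⦄, H p = H q → p < q → σ p < σ q := by
  have fiberIso (e : E) : Nonempty ({p // H p = e} ≃o {v // V v = e}) := by
    have hcard : Fintype.card {p // H p = e} = Fintype.card {v // V v = e} := by
      simpa [Fintype.card_subtype, fiber] using h e
    exact ⟨(Fintype.orderIsoFinOfCardEq _ hcard).symm.trans (Fintype.orderIsoFinOfCardEq _ rfl)⟩
  let φ := fun e => (fiberIso e).some
  let σ : P ≃ Q := (Equiv.sigmaFiberEquiv H).symm.trans
    ((Equiv.sigmaCongrRight fun e => (φ e).toEquiv).trans (Equiv.sigmaFiberEquiv V))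
  have hσ {p : P} {e : E} (hp : H p = e) : σ p = φ e ⟨p, hp⟩ := by
    subst hp
    rfl
  refine ⟨σ, funext fun p => ?_, fun p q hH hpq => ?_⟩
  · exact (φ (H p) ⟨p, rfl⟩).2
  · rw [hσ hH, hσ rfl]
    exact (φ (H q)).strictMono hpq

theorem equiv_eq_of_strictMono_on_fibers [WellFoundedLT P] {H : P → E} {V : Q → E} {σ τ : P ≃ Q}
    (hσ : V ∘ σ = H) (hτ : V ∘ τ = H) (hσ_mono : ∀ ⦃p q⦄, H p = H q → p < q → σ p < σ q)
    (hτ_mono : ∀ ⦃p q⦄, H p = H q → p < q → τ p < τ q) : σ = τ := by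
  have exists_fiberIso (χ : P ≃ Q) (hχ : V ∘ χ = H)
      (hχ_mono : ∀ ⦃p q⦄, H p = H q → p < q → χ p < χ q) (e : E) :
      ∃ φ : {p // H p = e} ≃o {v // V v = e}, ∀ p, (φ p : Q) = χ p := by
    let φ : {p // H p = e} ≃ {v // V v = e} := χ.subtypeEquiv fun p => by simp [← hχ]
    have hφ : StrictMono φ := fun p q hpq => hχ_mono (p.2.trans q.2.symm) hpq
    exact ⟨hφ.orderIsoOfSurjective φ φ.surjective, fun p => rfl⟩
  ext p
  obtain ⟨φ, hφ⟩ := exists_fiberIso σ hσ hσ_mono (H p)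
  obtain ⟨ψ, hψ⟩ := exists_fiberIso τ hτ hτ_mono (H p)
  rw [← hφ ⟨p, rfl⟩, ← hψ ⟨p, rfl⟩, Subsingleton.elim φ ψ]

end Standardization

section Sandwich

variable {E : Type*} {t u : ℕ} {col : E → Fin t} {row : E → Fin u}

theorem gridCount_eq_card_filter (M : Fin t → Fin u → ℤ) (n : ℕ) :
    gridCount M n = (Finset.univ.filter fun σ : Equiv.Perm (Fin n) => InGridClass M σ).card := by
  rw [gridCount, Nat.card_eq_fintype_card, Fintype.card_subtype]

/-- The words `H` and `V` over the set of cells spell out a gridding of `σ`: reading the points of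
`σ` from left to right, respectively from bottom to top, their cells are the letters of `H`,
respectively of `V`. -/
structure SpellsGridding (col : E → Fin t) (row : E → Fin u) {n : ℕ} (σ : Equiv.Perm (Fin n))
    (H V : Fin n → E) : Prop where
  labelling : IsCellLabelling col row σ H
  comp_eq : V ∘ σ = H

theorem SpellsGridding.perm_unique {n : ℕ} {σ τ : Equiv.Perm (Fin n)} {H V : Fin n → E}
    (hσ : SpellsGridding col row σ H V) (hτ : SpellsGridding col row τ H V) : σ = τ :=
  equiv_eq_of_strictMono_on_fibers hσ.comp_eq hτ.comp_eq hσ.labelling.increasing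
    hτ.labelling.increasing

variable [Fintype E]

theorem exists_spellsGridding_of_mem_sortedWords {n : ℕ} {a : E → ℕ} {H V : Fin n → E}
    (hH : H ∈ sortedWords col a n) (hV : V ∈ sortedWords row a n) :
    ∃ σ : Equiv.Perm (Fin n), SpellsGridding col row σ H V := by
  obtain ⟨hcol, hHa⟩ := mem_sortedWords.mp hH
  obtain ⟨hrow, hVa⟩ := mem_sortedWords.mp hV
  obtain ⟨σ, rfl, hσ⟩ := exists_equiv_strictMono_on_fibers fun e => (hHa e).trans (hVa e).symm
  exact ⟨σ, ⟨hcol, by simpa [Function.comp_assoc] using hrow, hσ⟩, rfl⟩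

theorem InGridClass.exists_spellsGridding {n : ℕ} {σ : Equiv.Perm (Fin n)}
    (hσ : InGridClass (cellMatrix col row) σ) :
    ∃ a ∈ Finset.piAntidiag Finset.univ n, ∃ H ∈ sortedWords col a n,
      ∃ V ∈ sortedWords row a n, SpellsGridding col row σ H V := by
  obtain ⟨H, hH⟩ := hσ.exists_isCellLabelling
  refine ⟨fun e => (fiber H e).card, ?_, H, mem_sortedWords.mpr ⟨hH.monotone_col, fun _ => rfl⟩,
    H ∘ σ.symm, mem_sortedWords.mpr ⟨hH.monotone_row, fun _ => card_fiber_comp_equiv _ _ _⟩,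
    hH, by simp [Function.comp_assoc]⟩
  have hsum := sum_fiberSum H fun _ => 1
  simpa [fiberSum] using hsum

theorem SpellsGridding.words_unique (hinj : Function.Injective fun e => (col e, row e)) {n : ℕ}
    {a : E → ℕ} {σ : Equiv.Perm (Fin n)} {H H' V V' : Fin n → E}
    (h : SpellsGridding col row σ H V) (h' : SpellsGridding col row σ H' V')
    (hH : H ∈ sortedWords col a n) (hH' : H' ∈ sortedWords col a n)
    (hV : V ∈ sortedWords row a n) (hV' : V' ∈ sortedWords row a n) : H = H' ∧ V = V' := by
  have hcol : col ∘ H = col ∘ H' := comp_eq_of_mem_sortedWords hH hH'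
  have hrow : row ∘ H = row ∘ H' := by
    rw [← h.comp_eq, ← h'.comp_eq, ← Function.comp_assoc, ← Function.comp_assoc,
      comp_eq_of_mem_sortedWords hV hV']
  have hHH' : H = H' := funext fun p => hinj (Prod.ext (congrFun hcol p) (congrFun hrow p))
  exact ⟨hHH', σ.surjective.injective_comp_right (h.comp_eq.trans (hHH'.trans h'.comp_eq.symm))⟩

theorem card_sortedWords_product {a : E → ℕ} {n : ℕ} (ha : ∑ e, a e = n) :
    (sortedWords col a n ×ˢ sortedWords row a n).card = cellWeight col row a := by
  rw [Finset.card_product, card_sortedWords col ha, card_sortedWords row ha, cellWeight]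

theorem cellWeight_le_gridCount (hinj : Function.Injective fun e => (col e, row e)) (a : E → ℕ) :
    cellWeight col row a ≤ gridCount (cellMatrix col row) (∑ e, a e) := by
  rw [← card_sortedWords_product rfl, gridCount_eq_card_filter]
  refine Finset.card_le_card_of_forall_subsingleton
    (fun w σ => SpellsGridding col row σ w.1 w.2) (fun w hw => ?_) fun σ _ w hw w' hw' => ?_
  · have hw := Finset.mem_product.mp hw
    obtain ⟨σ, hσ⟩ := exists_spellsGridding_of_mem_sortedWords hw.1 hw.2
    exact ⟨σ, by simpa using hσ.labelling.inGridClass hinj, hσ⟩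
  · have hw_mem := Finset.mem_product.mp hw.1
    have hw'_mem := Finset.mem_product.mp hw'.1
    exact Prod.ext_iff.mpr
      (hw.2.words_unique hinj hw'.2 hw_mem.1 hw'_mem.1 hw_mem.2 hw'_mem.2)

theorem gridCount_le_sum_cellWeight (n : ℕ) :
    gridCount (cellMatrix col row) n ≤
      ∑ a ∈ Finset.piAntidiag Finset.univ n, cellWeight col row a := by
  calc gridCount (cellMatrix col row) n
      ≤ ((Finset.piAntidiag Finset.univ n).biUnion fun a =>
          sortedWords col a n ×ˢ sortedWords row a n).card := by
        rw [gridCount_eq_card_filter]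
        refine Finset.card_le_card_of_forall_subsingleton
          (fun σ w => SpellsGridding col row σ w.1 w.2) (fun σ hσ => ?_)
          fun w _ _ hσ _ hτ => SpellsGridding.perm_unique (H := w.1) (V := w.2) hσ.2 hτ.2
        obtain ⟨a, ha, H, hH, V, hV, hσ⟩ :=
          InGridClass.exists_spellsGridding (Finset.mem_filter.mp hσ).2
        exact ⟨(H, V), Finset.mem_biUnion.mpr ⟨a, ha, Finset.mk_mem_product hH hV⟩, hσ⟩
    _ ≤ ∑ a ∈ Finset.piAntidiag Finset.univ n,
          (sortedWords col a n ×ˢ sortedWords row a n).card := Finset.card_biUnion_le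
    _ = ∑ a ∈ Finset.piAntidiag Finset.univ n, cellWeight col row a :=
        Finset.sum_congr rfl fun a ha =>
          card_sortedWords_product (Finset.mem_piAntidiag.mp ha).1

end Sandwich

section Root

open Topology

theorem tendsto_const_rpow_one_div_nat {C : ℝ} (hC : 0 < C) :
    Tendsto (fun n : ℕ => C ^ (1 / (n : ℝ))) atTop (𝓝 1) := by
  simpa using tendsto_const_nhds.rpow (tendsto_one_div_atTop_nhds_zero_nat (𝕜 := ℝ))
    (Or.inl hC.ne')

theorem tendsto_succ_pow_rpow_one_div_nat (K : ℕ) :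
    Tendsto (fun n : ℕ => (((n : ℝ) + 1) ^ K) ^ (1 / (n : ℝ))) atTop (𝓝 1) := by
  have hroot : Tendsto (fun n : ℕ => ((n : ℝ) + 1) ^ (1 / (n : ℝ))) atTop (𝓝 1) := by
    have h := (tendsto_rpow_div_mul_add 1 1 (-1) zero_ne_one).comp
      (tendsto_atTop_add_const_right _ 1 tendsto_natCast_atTop_atTop)
    exact h.congr fun n => by simp
  have hpow := hroot.pow K
  rw [one_pow] at hpow
  refine hpow.congr fun n => ?_
  rw [← Real.rpow_mul_natCast (by positivity), ← Real.rpow_natCast_mul (by positivity), mul_comm]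

theorem le_of_tendsto_root {x : ℕ → ℝ} {L B C : ℝ} (hx : ∀ n, 0 ≤ x n) (hB : 0 ≤ B) (hC : 0 < C)
    (hle : ∀ n, x n ≤ C * B ^ n)
    (hL : Tendsto (fun n : ℕ => x n ^ (1 / (n : ℝ))) atTop (𝓝 L)) : L ≤ B := by
  have hbound : Tendsto (fun n : ℕ => C ^ (1 / (n : ℝ)) * B) atTop (𝓝 B) := by
    simpa using (tendsto_const_rpow_one_div_nat hC).mul_const B
  refine le_of_tendsto_of_tendsto hL hbound ?_
  filter_upwards [eventually_ne_atTop 0] with n hn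
  calc x n ^ (1 / (n : ℝ)) ≤ (C * B ^ n) ^ (1 / (n : ℝ)) :=
        Real.rpow_le_rpow (hx n) (hle n) (by positivity)
    _ = C ^ (1 / (n : ℝ)) * B := by
        rw [Real.mul_rpow hC.le (by positivity), one_div, Real.pow_rpow_inv_natCast hB hn]

theorem tendsto_root_of_le_of_le {x y : ℕ → ℝ} {L : ℝ} {K : ℕ} (hx : ∀ n, 0 ≤ x n)
    (hxy : ∀ n, x n ≤ y n) (hyx : ∀ n, y n ≤ ((n : ℝ) + 1) ^ K * x n)
    (hL : Tendsto (fun n : ℕ => x n ^ (1 / (n : ℝ))) atTop (𝓝 L)) :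
    Tendsto (fun n : ℕ => y n ^ (1 / (n : ℝ))) atTop (𝓝 L) := by
  refine tendsto_of_tendsto_of_tendsto_of_le_of_le hL
    (one_mul L ▸ (tendsto_succ_pow_rpow_one_div_nat K).mul hL) (fun n => ?_) fun n => ?_
  · exact Real.rpow_le_rpow (hx n) (hxy n) (by positivity)
  · calc y n ^ (1 / (n : ℝ)) ≤ (((n : ℝ) + 1) ^ K * x n) ^ (1 / (n : ℝ)) :=
          Real.rpow_le_rpow ((hx n).trans (hxy n)) (hyx n) (by positivity)
      _ = _ := Real.mul_rpow (by positivity) (hx n)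

theorem exists_tendsto_root_of_mul_le {x : ℕ → ℝ} {B C : ℝ} (hpos : ∀ n, 0 < x n)
    (hmul : ∀ m n, x m * x n ≤ x (m + n)) (hB : 0 < B) (hle : ∀ n, x n ≤ C * B ^ n) :
    ∃ L, 0 < L ∧ (∀ n, x n ≤ L ^ n) ∧
      Tendsto (fun n : ℕ => x n ^ (1 / (n : ℝ))) atTop (𝓝 L) := by
  have hsub : Subadditive fun n => -Real.log (x n) := fun m n => by
    rw [← neg_add, ← Real.log_mul (hpos m).ne' (hpos n).ne', neg_le_neg_iff]
    exact Real.log_le_log (mul_pos (hpos m) (hpos n)) (hmul m n)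
  have hbdd : BddBelow (Set.range fun n : ℕ => -Real.log (x n) / n) := by
    have hC : 0 < C := pos_of_mul_pos_left ((hpos 0).trans_le (hle 0)) (by simp)
    refine ⟨-(|Real.log C| + |Real.log B|), ?_⟩
    rintro _ ⟨n, rfl⟩
    have hlog : Real.log (x n) ≤ Real.log C + n * Real.log B := by
      rw [← Real.log_pow, ← Real.log_mul hC.ne' (by positivity)]
      exact Real.log_le_log (hpos n) (hle n)
    rcases n.eq_zero_or_pos with rfl | hn
    · simp only [Nat.cast_zero, div_zero]
      linarith [abs_nonneg (Real.log C), abs_nonneg (Real.log B)]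
    · have hn : (1 : ℝ) ≤ n := by exact_mod_cast hn
      rw [le_div_iff₀ (by linarith)]
      nlinarith [le_abs_self (Real.log C), le_abs_self (Real.log B), abs_nonneg (Real.log C)]
  refine ⟨Real.exp (-hsub.lim), Real.exp_pos _, fun n => ?_, ?_⟩
  · rcases eq_or_ne n 0 with rfl | hn
    · have := hmul 0 0
      have := hpos 0
      simp only [add_zero, pow_zero] at *
      nlinarith
    · have hn0 : (0 : ℝ) < n := by exact_mod_cast hn.bot_lt
      have hlim := hsub.lim_le_div hbdd hn
      rw [le_div_iff₀ hn0] at hlim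
      rw [← Real.exp_nat_mul, ← Real.log_le_iff_le_exp (hpos n)]
      linarith
  · refine ((Real.continuous_exp.tendsto _).comp (hsub.tendsto_lim hbdd).neg).congr fun n => ?_
    rw [Real.rpow_def_of_pos (hpos n), Function.comp_apply]
    congr 1
    ring

end Root

section GeneratingSeries

open Topology

variable {E : Type*} [Fintype E] {w : (E → ℕ) → ℕ}

theorem tsum_eq_tsum_sum_piAntidiag (F : (E → ℕ) → ENNReal) :
    ∑' a, F a = ∑' n, ∑ a ∈ Finset.piAntidiag Finset.univ n, F a := by
  have hmem (n : ℕ) (a : E → ℕ) : a ∈ Finset.piAntidiag Finset.univ n ↔ ∑ e, a e = n := by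
    simp [Finset.mem_piAntidiag]
  rw [← (Equiv.sigmaFiberEquiv fun a : E → ℕ => ∑ e, a e).tsum_eq, ENNReal.tsum_sigma']
  refine tsum_congr fun n => ?_
  rw [← Finset.tsum_subtype, ← (Equiv.subtypeEquivRight (hmem n)).symm.tsum_eq]
  rfl

/-- The generating function `∑ w(a) z^|a|` of the weights `w`, with values in `[0, ∞]` so that it
makes sense also outside its disc of convergence. -/
def generatingSeries (w : (E → ℕ) → ℕ) (z : ENNReal) : ENNReal :=
  ∑' a : E → ℕ, (w a : ENNReal) * z ^ ∑ e, a e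

/-- The largest weight of a vector of total size `n`. -/
def levelMax (w : (E → ℕ) → ℕ) (n : ℕ) : ℕ :=
  (Finset.piAntidiag Finset.univ n).sup w

/-- The total weight of the vectors of total size `n`. -/
def levelSum (w : (E → ℕ) → ℕ) (n : ℕ) : ℕ :=
  ∑ a ∈ Finset.piAntidiag Finset.univ n, w a

theorem le_levelMax (w : (E → ℕ) → ℕ) (a : E → ℕ) : w a ≤ levelMax w (∑ e, a e) :=
  Finset.le_sup (f := w) (by simp [Finset.mem_piAntidiag])

theorem levelMax_le_iff {n m : ℕ} : levelMax w n ≤ m ↔ ∀ a : E → ℕ, ∑ e, a e = n → w a ≤ m := by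
  simp [levelMax, Finset.sup_le_iff, Finset.mem_piAntidiag]

theorem exists_eq_levelMax [Nonempty E] (w : (E → ℕ) → ℕ) (n : ℕ) :
    ∃ a : E → ℕ, ∑ e, a e = n ∧ w a = levelMax w n := by
  have hne : (Finset.piAntidiag (Finset.univ : Finset E) n).Nonempty :=
    ⟨Pi.single (Classical.arbitrary E) n, by simp [Finset.mem_piAntidiag]⟩
  obtain ⟨a, ha, hmax⟩ := Finset.exists_mem_eq_sup _ hne w
  exact ⟨a, by simpa [Finset.mem_piAntidiag] using ha, hmax.symm⟩

theorem levelMax_mul_le [Nonempty E] (hmul : ∀ a b, w a * w b ≤ w (a + b)) (m n : ℕ) :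
    levelMax w m * levelMax w n ≤ levelMax w (m + n) := by
  obtain ⟨a, rfl, ha⟩ := exists_eq_levelMax w m
  obtain ⟨b, rfl, hb⟩ := exists_eq_levelMax w n
  rw [← ha, ← hb]
  simpa [Finset.sum_add_distrib] using (hmul a b).trans (le_levelMax w (a + b))

theorem levelSum_le (w : (E → ℕ) → ℕ) (n : ℕ) :
    levelSum w n ≤ (n + 1) ^ Fintype.card E * levelMax w n := by
  have hcard : (Finset.piAntidiag (Finset.univ : Finset E) n).card ≤ (n + 1) ^ Fintype.card E := by
    calc (Finset.piAntidiag (Finset.univ : Finset E) n).card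
        ≤ (Fintype.piFinset fun _ : E => Finset.range (n + 1)).card := by
          refine Finset.card_le_card fun a ha => ?_
          have hsum : ∑ e, a e = n := by simpa [Finset.mem_piAntidiag] using ha
          simp only [Fintype.mem_piFinset, Finset.mem_range, Nat.lt_succ_iff]
          exact fun e => hsum ▸ Finset.single_le_sum (fun _ _ => Nat.zero_le _) (Finset.mem_univ e)
      _ = (n + 1) ^ Fintype.card E := by simp
  exact (Finset.sum_le_card_nsmul _ _ _ fun a ha => Finset.le_sup ha).trans
    (Nat.mul_le_mul_right _ hcard)

theorem generatingSeries_eq_tsum_levelSum (w : (E → ℕ) → ℕ) (z : ENNReal) :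
    generatingSeries w z = ∑' n, (levelSum w n : ENNReal) * z ^ n := by
  rw [generatingSeries, tsum_eq_tsum_sum_piAntidiag]
  refine tsum_congr fun n => ?_
  rw [levelSum, Nat.cast_sum, Finset.sum_mul]
  exact Finset.sum_congr rfl fun a ha => by rw [(Finset.mem_piAntidiag.mp ha).1]

theorem exists_levelMax_le_mul_pow [Nonempty E] {Γ : ℝ} (hΓ : 0 < Γ)
    (hconv : generatingSeries w (ENNReal.ofReal Γ⁻¹) ≠ ⊤) :
    ∃ C : ℝ, ∀ n, (levelMax w n : ℝ) ≤ C * Γ ^ n := by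
  refine ⟨(generatingSeries w (ENNReal.ofReal Γ⁻¹)).toReal, fun n => ?_⟩
  obtain ⟨a, rfl, ha⟩ := exists_eq_levelMax w n
  have hterm := ENNReal.toReal_mono hconv (ENNReal.le_tsum a)
  rw [ENNReal.toReal_mul, ENNReal.toReal_pow, ENNReal.toReal_ofReal (by positivity),
    ENNReal.toReal_natCast, ha, inv_pow, ← div_eq_mul_inv, div_le_iff₀ (by positivity)] at hterm
  exact hterm

theorem generatingSeries_ne_top {L γ : ℝ} (hL : 0 < L) (hLγ : L < γ)
    (hle : ∀ n, (levelMax w n : ℝ) ≤ L ^ n) :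
    generatingSeries w (ENNReal.ofReal γ⁻¹) ≠ ⊤ := by
  have hγ : 0 < γ := hL.trans hLγ
  have hq : ‖L / γ‖ < 1 := by
    rwa [Real.norm_of_nonneg (by positivity), div_lt_one hγ]
  have hsummable : Summable fun n : ℕ => ((n : ℝ) + 1) ^ Fintype.card E * (L / γ) ^ n := by
    have hgeom := summable_pow_mul_geometric_of_norm_lt_one (Fintype.card E) hq
    refine (((summable_nat_add_iff 1).mpr hgeom).mul_left (γ / L)).congr fun n => ?_
    rw [Nat.cast_add_one, pow_succ]
    field_simp
  have hterm (n : ℕ) : (levelSum w n : ENNReal) * ENNReal.ofReal γ⁻¹ ^ n ≤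
      ENNReal.ofReal (((n : ℝ) + 1) ^ Fintype.card E * (L / γ) ^ n) := by
    have hsum : (levelSum w n : ℝ) ≤ ((n : ℝ) + 1) ^ Fintype.card E * L ^ n :=
      calc (levelSum w n : ℝ) ≤ ((n : ℝ) + 1) ^ Fintype.card E * levelMax w n := by
            exact_mod_cast levelSum_le w n
        _ ≤ _ := mul_le_mul_of_nonneg_left (hle n) (by positivity)
    rw [← ENNReal.ofReal_natCast, ← ENNReal.ofReal_pow (by positivity),
      ← ENNReal.ofReal_mul (by positivity), div_pow, div_eq_mul_inv, ← mul_assoc, inv_pow]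
    exact ENNReal.ofReal_le_ofReal (mul_le_mul_of_nonneg_right hsum (by positivity))
  rw [generatingSeries_eq_tsum_levelSum]
  exact ne_top_of_le_ne_top hsummable.tsum_ofReal_ne_top (ENNReal.tsum_le_tsum hterm)

theorem nonempty_of_generatingSeries_eq_top {z : ENNReal} (h : generatingSeries w z = ⊤) :
    Nonempty E := by
  by_contra hE
  rw [not_nonempty_iff] at hE
  simp [generatingSeries] at h

/-- Supermultiplicativity gives the existence of the limit, by Fekete's lemma; the limit is the
reciprocal of the radius of convergence of the generating function. -/
theorem exists_growthRate_mem_Icc {γ Γ : ℝ} {g : ℕ → ℕ} (hw : ∀ a, 0 < w a)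
    (hmul : ∀ a b, w a * w b ≤ w (a + b)) (hle : ∀ a, w a ≤ g (∑ e, a e))
    (hge : ∀ n, g n ≤ levelSum w n) (hΓ : 0 < Γ)
    (hconv : generatingSeries w (ENNReal.ofReal Γ⁻¹) ≠ ⊤)
    (hdiv : generatingSeries w (ENNReal.ofReal γ⁻¹) = ⊤) :
    ∃ L ∈ Set.Icc γ Γ, Tendsto (fun n : ℕ => (g n : ℝ) ^ (1 / (n : ℝ))) atTop (𝓝 L) := by
  have : Nonempty E := nonempty_of_generatingSeries_eq_top hdiv
  obtain ⟨C, hC⟩ := exists_levelMax_le_mul_pow hΓ hconv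
  have hpos (n : ℕ) : (0 : ℝ) < levelMax w n := by
    obtain ⟨a, -, ha⟩ := exists_eq_levelMax w n
    exact_mod_cast ha ▸ hw a
  have hCpos : 0 < C := by simpa using (hpos 0).trans_le (hC 0)
  obtain ⟨L, hL, hle_pow, hlim⟩ := exists_tendsto_root_of_mul_le hpos
    (fun m n => by exact_mod_cast levelMax_mul_le hmul m n) hΓ hC
  refine ⟨L, ⟨?_, le_of_tendsto_root (fun n => (hpos n).le) hΓ.le hCpos hC hlim⟩,
    tendsto_root_of_le_of_le (K := Fintype.card E) (fun n => (hpos n).le) (fun n => ?_)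
      (fun n => ?_) hlim⟩
  · by_contra! hLγ
    exact generatingSeries_ne_top hL hLγ hle_pow hdiv
  · exact_mod_cast levelMax_le_iff.mpr fun a ha => ha ▸ hle a
  · exact_mod_cast (hge n).trans (levelSum_le w n)

end GeneratingSeries

section NegativeMultinomial

theorem tsum_choose_mul_pow (y : ENNReal) (b : ℕ) :
    ∑' m : ℕ, ((m + b).choose b : ENNReal) * y ^ m = ((1 - y)⁻¹) ^ (b + 1) := by
  rcases lt_or_ge y 1 with hy | hy
  · lift y to NNReal using hy.ne_top
    have hy1 : (y : ℝ) < 1 := by exact_mod_cast hy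
    have hnorm : ‖(y : ℝ)‖ < 1 := by simpa using hy1
    have hterm (m : ℕ) : ((m + b).choose b : ENNReal) * (y : ENNReal) ^ m =
        ENNReal.ofReal (((m + b).choose b : ℝ) * (y : ℝ) ^ m) := by
      rw [ENNReal.ofReal_mul (by positivity), ENNReal.ofReal_natCast,
        ENNReal.ofReal_pow (by positivity), ENNReal.ofReal_coe_nnreal]
    rw [tsum_congr hterm, ← ENNReal.ofReal_tsum_of_nonneg (fun m => by positivity)
      (summable_choose_mul_geometric_of_norm_lt_one b hnorm),
      tsum_choose_mul_geometric_of_norm_lt_one b hnorm, one_div, ← inv_pow,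
      ENNReal.ofReal_pow (inv_nonneg.mpr (sub_nonneg.mpr hy1.le)),
      ENNReal.ofReal_inv_of_pos (sub_pos.mpr hy1), ENNReal.ofReal_sub _ y.coe_nonneg,
      ENNReal.ofReal_one, ENNReal.ofReal_coe_nnreal]
  · rw [tsub_eq_zero_of_le hy, ENNReal.inv_zero, ENNReal.top_pow b.succ_ne_zero, eq_top_iff,
      ← ENNReal.tsum_const_eq_top_of_ne_zero (α := ℕ) one_ne_zero]
    refine ENNReal.tsum_le_tsum fun m => one_le_mul ?_ (one_le_pow₀ hy)
    exact_mod_cast Nat.choose_pos (Nat.le_add_left b m)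

theorem tsum_multinomial_mul_choose_mul_prod_pow {κ : Type*} [Fintype κ] (y : κ → ENNReal)
    (b : ℕ) :
    ∑' x : κ → ℕ, (Nat.multinomial Finset.univ x : ENNReal) * ((∑ i, x i + b).choose b : ENNReal) *
      ∏ i, y i ^ x i = ((1 - ∑ i, y i)⁻¹) ^ (b + 1) := by
  rw [← tsum_choose_mul_pow, tsum_eq_tsum_sum_piAntidiag]
  refine tsum_congr fun m => ?_
  rw [Finset.sum_pow_eq_sum_piAntidiag, Finset.mul_sum]
  refine Finset.sum_congr rfl fun x hx => ?_
  rw [(Finset.mem_piAntidiag.mp hx).1]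
  ring

end NegativeMultinomial

section Extension

variable {E I J κ : Type*} {col : E → I} {row : E → J} {root : I}

/-- The columns of an extended set of cells. The extension exchanges rows and columns, then adds a
new root column `none` with one cell in the row of the old root and one cell in a new row `l` for
every `l : κ`. -/
def extendCol (κ : Type*) (row : E → J) : E ⊕ Option κ → Option J :=
  Sum.elim (some ∘ row) fun _ => none

/-- The rows of an extended set of cells; see `extendCol`. -/
def extendRow (κ : Type*) (col : E → I) (root : I) : E ⊕ Option κ → I ⊕ κ :=
  Sum.elim (Sum.inl ∘ col) fun o => o.elim (Sum.inl root) Sum.inr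

theorem injective_extend (hinj : Function.Injective fun e => (col e, row e)) :
    Function.Injective fun e => (extendCol κ row e, extendRow κ col root e) := by
  rintro (e | _ | l) (e' | _ | l') h
  case inl.inl =>
    have h : row e = row e' ∧ col e = col e' := by simpa [extendCol, extendRow] using h
    exact congrArg _ (hinj (Prod.ext h.2 h.1))
  all_goals simp_all [extendCol, extendRow]

variable [Fintype E] [Fintype κ]

theorem fiberSum_extendCol_none (a : E → ℕ) (x : Option κ → ℕ) :
    fiberSum (extendCol κ row) (Sum.elim a x) none = ∑ o, x o := by
  have hsome : fiber (some ∘ row) none = ∅ := by ext; simp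
  have hnone : fiber (fun _ : Option κ => (none : Option J)) none = Finset.univ := by ext; simp
  rw [fiberSum, extendCol, fiber_sumElim, hsome, hnone, Finset.sum_disjSum]
  simp only [Finset.sum_empty, zero_add, Sum.elim_inr]

variable [Fintype I] [Fintype J]

/-- The weight of the cells `(col e, row e)` together with one more cell in the column `root`, with
`b` points, that is alone in its row. -/
def rootedWeight (col : E → I) (row : E → J) (root : I) (b : ℕ) (a : E → ℕ) : ℕ :=
  cellWeight col row a * (fiberSum col a root + b).choose b

theorem rootedWeight_zero (col : E → I) (row : E → J) (root : I) :
    rootedWeight col row root 0 = cellWeight col row := by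
  ext a
  simp [rootedWeight]

theorem fiberMultinomial_extendCol (a : E → ℕ) (x : Option κ → ℕ) :
    fiberMultinomial (extendCol κ row) (Sum.elim a x) =
      fiberMultinomial row a * Nat.multinomial Finset.univ x := by
  have hchoose (o : Option J) : (fiberSum (some ∘ row) a o +
      fiberSum (fun _ : Option κ => none) x o).choose
        (fiberSum (fun _ : Option κ => (none : Option J)) x o) = 1 := by
    cases o <;> simp [fiberSum_eq_zero]
  rw [extendCol, fiberMultinomial_sumElim, Finset.prod_eq_one fun o _ => hchoose o, one_mul,
    fiberMultinomial_comp_of_injective (Option.some_injective J), fiberMultinomial_const]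

theorem fiberMultinomial_extendRow (a : E → ℕ) (x : Option κ → ℕ) :
    fiberMultinomial (extendRow κ col root) (Sum.elim a x) =
      (fiberSum col a root + x none).choose (x none) * fiberMultinomial col a := by
  let leafRow : Option κ → I ⊕ κ := fun o => o.elim (Sum.inl root) Sum.inr
  have hleaf : leafRow.Injective := by
    rintro (_ | l) (_ | l') h <;> simp_all [leafRow]
  have hcol (i : I) : fiberSum (Sum.inl ∘ col : E → I ⊕ κ) a (Sum.inl i) = fiberSum col a i := by
    simp [fiberSum, fiber]
  have hroot : fiberSum leafRow x (Sum.inl root) = x none := fiberSum_of_injective hleaf x none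
  have hchoose (r : I ⊕ κ) (hr : r ≠ Sum.inl root) : (fiberSum (Sum.inl ∘ col) a r +
      fiberSum leafRow x r).choose (fiberSum leafRow x r) = 1 := by
    rcases r with i | l
    · have hzero : fiberSum leafRow x (Sum.inl i) = 0 :=
        fiberSum_eq_zero (by rintro (_ | l) <;> simp_all [leafRow, eq_comm]) x
      rw [hzero, Nat.choose_zero_right]
    · have hzero : fiberSum (Sum.inl ∘ col) a (Sum.inr l : I ⊕ κ) = 0 :=
        fiberSum_eq_zero (by simp) a
      rw [hzero, zero_add, Nat.choose_self]
  rw [extendRow, fiberMultinomial_sumElim, Fintype.prod_eq_single (Sum.inl root) hchoose, hcol,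
    hroot, fiberMultinomial_comp_of_injective Sum.inl_injective,
    fiberMultinomial_of_injective hleaf, mul_one]

theorem cellWeight_extend (a : E → ℕ) (x : Option κ → ℕ) :
    cellWeight (extendCol κ row) (extendRow κ col root) (Sum.elim a x) =
      Nat.multinomial Finset.univ x * rootedWeight col row root (x none) a := by
  rw [cellWeight, fiberMultinomial_extendCol, fiberMultinomial_extendRow, rootedWeight, cellWeight]
  ring

theorem generatingSeries_rootedWeight_extend {z A T : ENNReal}
    (h : ∀ b, generatingSeries (rootedWeight col row root b) z = A * T ^ b) (b : ℕ) :
    generatingSeries (rootedWeight (extendCol κ row) (extendRow κ col root) none b) z =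
      A * ((1 - z * (Fintype.card κ + T))⁻¹) ^ (b + 1) := by
  let y : Option κ → ENNReal := fun o => o.elim (z * T) fun _ => z
  have hy : ∑ o, y o = z * (Fintype.card κ + T) := by
    simp [y, Fintype.sum_option]
    ring
  have hprod (x : Option κ → ℕ) : ∏ o, y o ^ x o = z ^ (∑ o, x o) * T ^ x none := by
    simp only [y, Fintype.prod_option, Fintype.sum_option, Option.elim, Finset.prod_pow_eq_pow_sum,
      pow_add, mul_pow]
    ring
  have hweight (a : E → ℕ) (x : Option κ → ℕ) :
      rootedWeight (extendCol κ row) (extendRow κ col root) none b (Sum.elim a x) =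
        Nat.multinomial Finset.univ x * (∑ o, x o + b).choose b *
          rootedWeight col row root (x none) a := by
    rw [rootedWeight, cellWeight_extend, fiberSum_extendCol_none]
    ring
  rw [← hy, ← tsum_multinomial_mul_choose_mul_prod_pow, ← ENNReal.tsum_mul_left, generatingSeries,
    ← (Equiv.sumArrowEquivProdArrow E (Option κ) ℕ).symm.tsum_eq, ENNReal.tsum_prod',
    ENNReal.tsum_comm]
  refine tsum_congr fun x => ?_
  calc ∑' a : E → ℕ,
        (rootedWeight (extendCol κ row) (extendRow κ col root) none b (Sum.elim a x) : ENNReal) *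
          z ^ ∑ e, Sum.elim a x e
      = ∑' a : E → ℕ, (Nat.multinomial Finset.univ x * (∑ o, x o + b).choose b * z ^ ∑ o, x o) *
          (rootedWeight col row root (x none) a * z ^ ∑ e, a e) := by
        refine tsum_congr fun a => ?_
        rw [hweight, Fintype.sum_sum_type, pow_add]
        push_cast
        simp only [Sum.elim_inl, Sum.elim_inr]
        ring
    _ = Nat.multinomial Finset.univ x * (∑ o, x o + b).choose b * z ^ (∑ o, x o) *
          (A * T ^ x none) := by
        rw [ENNReal.tsum_mul_left, ← h, generatingSeries]
    _ = A * (Nat.multinomial Finset.univ x * (∑ o, x o + b).choose b * ∏ o, y o ^ x o) := by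
        rw [hprod]
        ring

end Extension

section Caterpillar

/-- A finite set of cells, given by their columns and rows, with a distinguished column. -/
structure RootedCells where
  Cell : Type
  Col : Type
  Row : Type
  [fintypeCell : Fintype Cell]
  [fintypeCol : Fintype Col]
  [fintypeRow : Fintype Row]
  col : Cell → Col
  row : Cell → Row
  root : Col
  injective : Function.Injective fun e => (col e, row e)

attribute [instance] RootedCells.fintypeCell RootedCells.fintypeCol RootedCells.fintypeRow

/-- Cells whose row-column graph is a caterpillar: the spine has `k` edges, and the `i`-th vertex
added to it carries `N i` leaves. -/
def caterpillar (N : ℕ → ℕ) : ℕ → RootedCells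
  | 0 =>
    { Cell := Empty, Col := Unit, Row := Unit, col := Empty.elim, row := Empty.elim, root := ()
      injective := fun e => e.elim }
  | k + 1 =>
    { Cell := (caterpillar N k).Cell ⊕ Option (Fin (N k))
      Col := Option (caterpillar N k).Row
      Row := (caterpillar N k).Col ⊕ Fin (N k)
      col := extendCol _ (caterpillar N k).row
      row := extendRow _ (caterpillar N k).col (caterpillar N k).root
      root := none
      injective := injective_extend (caterpillar N k).injective }

/-- The factors of the generating function of a caterpillar. -/
def caterpillarFactor (N : ℕ → ℕ) (z : ENNReal) : ℕ → ENNReal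
  | 0 => 1
  | k + 1 => (1 - z * (N k + caterpillarFactor N z k))⁻¹

theorem generatingSeries_rootedWeight_caterpillar (N : ℕ → ℕ) (z : ENNReal) (k b : ℕ) :
    generatingSeries
        (rootedWeight (caterpillar N k).col (caterpillar N k).row (caterpillar N k).root b) z =
      (∏ i ∈ Finset.range (k + 1), caterpillarFactor N z i) * caterpillarFactor N z k ^ b := by
  induction k generalizing b with
  | zero =>
    change generatingSeries (rootedWeight (Empty.elim : Empty → Unit) (Empty.elim : Empty → Unit)
      () b) z = _
    have hcell (f : Empty → Unit) (a : Empty → ℕ) : fiberMultinomial f a = 1 :=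
      fiberMultinomial_of_injective (Function.injective_of_subsingleton f) a
    simp [generatingSeries, rootedWeight, cellWeight, hcell, fiberSum_eq_zero, caterpillarFactor]
  | succ k ih =>
    rw [Finset.prod_range_succ, mul_assoc, ← pow_succ', caterpillarFactor,
      ← Fintype.card_fin (N k)]
    exact generatingSeries_rootedWeight_extend ih b

theorem generatingSeries_cellWeight_caterpillar (N : ℕ → ℕ) (z : ENNReal) (k : ℕ) :
    generatingSeries (cellWeight (caterpillar N k).col (caterpillar N k).row) z =
      ∏ i ∈ Finset.range (k + 1), caterpillarFactor N z i := by
  rw [← rootedWeight_zero _ _ (caterpillar N k).root, generatingSeries_rootedWeight_caterpillar,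
    pow_zero, mul_one]

end Caterpillar

section Pivots

/-- The quantities `x / T (k + 1)`, where `T` is the sequence of factors of the generating function
of the caterpillar with leaf numbers `N` at `z = 1 / x`, continued by the same recursion beyond the
radius of convergence. -/
def pivot (N : ℕ → ℕ) (x : ℝ) : ℕ → ℝ
  | 0 => x - N 0 - 1
  | k + 1 => x - N (k + 1) - x / pivot N x k

variable {N : ℕ → ℕ} {x : ℝ}

theorem one_sub_ofReal_inv_mul (hx : 0 < x) (n : ℕ) {t : ℝ} (ht : 0 ≤ t) :
    1 - ENNReal.ofReal x⁻¹ * (n + ENNReal.ofReal t) = ENNReal.ofReal ((x - n - t) / x) := by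
  rw [← ENNReal.ofReal_natCast, ← ENNReal.ofReal_add n.cast_nonneg ht,
    ← ENNReal.ofReal_mul (by positivity), ← ENNReal.ofReal_one,
    ← ENNReal.ofReal_sub _ (by positivity)]
  congr 1
  field_simp
  ring

theorem caterpillarFactor_succ_eq (hx : 0 < x) {k : ℕ} (hpos : ∀ i < k, 0 < pivot N x i) :
    caterpillarFactor N (ENNReal.ofReal x⁻¹) (k + 1) = (ENNReal.ofReal (pivot N x k / x))⁻¹ := by
  induction k with
  | zero =>
    rw [caterpillarFactor, caterpillarFactor, pivot, ← one_sub_ofReal_inv_mul hx _ zero_le_one,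
      ENNReal.ofReal_one]
  | succ k ih =>
    have hk : 0 < pivot N x k := hpos k k.lt_succ_self
    rw [caterpillarFactor, ih fun i hi => hpos i (hi.trans k.lt_succ_self), pivot,
      ← one_sub_ofReal_inv_mul hx _ (by positivity), ← ENNReal.ofReal_inv_of_pos (by positivity),
      inv_div]

theorem caterpillarFactor_ne_top (hx : 0 < x) (hpos : ∀ k, 0 < pivot N x k) (k : ℕ) :
    caterpillarFactor N (ENNReal.ofReal x⁻¹) k ≠ ⊤ := by
  cases k with
  | zero => exact ENNReal.one_ne_top
  | succ k =>
    rw [caterpillarFactor_succ_eq hx fun i _ => hpos i]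
    simpa using div_pos (hpos k) hx

theorem exists_caterpillarFactor_eq_top (hx : 0 < x) {k : ℕ} (hk : pivot N x k ≤ 0) :
    ∃ i, caterpillarFactor N (ENNReal.ofReal x⁻¹) i = ⊤ := by
  induction k using Nat.strong_induction_on with
  | h k ih =>
    by_cases! hpos : ∀ i < k, 0 < pivot N x i
    · refine ⟨k + 1, ?_⟩
      rw [caterpillarFactor_succ_eq hx hpos,
        ENNReal.ofReal_of_nonpos (div_nonpos_of_nonpos_of_nonneg hk hx.le), ENNReal.inv_zero]
    · obtain ⟨i, hi, hi_nonpos⟩ := hpos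
      exact ih i hi hi_nonpos

theorem caterpillarFactor_ne_zero (N : ℕ → ℕ) (z : ENNReal) (k : ℕ) :
    caterpillarFactor N z k ≠ 0 := by
  cases k with
  | zero => exact one_ne_zero
  | succ k =>
    rw [caterpillarFactor, Ne, ENNReal.inv_eq_zero]
    exact ne_top_of_le_ne_top ENNReal.one_ne_top tsub_le_self

theorem exists_forall_pivot_mem_Ico {α : ℝ} (hα : 0 < α) (hx : 0 ≤ x) (hone : α + 1 ≤ x)
    (hαx : x ≤ α * (x - α)) : ∃ N : ℕ → ℕ, ∀ k, pivot N x k ∈ Set.Ico α (α + 1) := by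
  have exists_leaves {s : ℝ} (hs : s ≤ x - α) : ∃ n : ℕ, x - n - s ∈ Set.Ico α (α + 1) := by
    refine ⟨⌊x - α - s⌋₊, ?_, ?_⟩
    · linarith [Nat.floor_le (sub_nonneg.mpr hs)]
    · linarith [Nat.lt_floor_add_one (x - α - s)]
  obtain ⟨n₀, hn₀⟩ := exists_leaves (s := 1) (by linarith)
  have hdiv (d : Set.Ico α (α + 1)) : x / d ≤ x - α := by
    have hd : α ≤ d := d.2.1
    exact (div_le_div_of_nonneg_left hx hα hd).trans ((div_le_iff₀' hα).mpr hαx)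
  choose n hn using fun d => exists_leaves (hdiv d)
  let d : ℕ → Set.Ico α (α + 1) := fun k => k.rec ⟨_, hn₀⟩ fun _ d => ⟨_, hn d⟩
  let N : ℕ → ℕ := fun k => k.casesOn n₀ fun k => n (d k)
  have hpivot (k : ℕ) : pivot N x k = (d k).1 := by
    induction k with
    | zero => rfl
    | succ k ih => rw [pivot, ih]
  exact ⟨N, fun k => hpivot k ▸ (d k).2⟩

end Pivots

section Divergence

variable {N : ℕ → ℕ} {Γ g : ℝ}

/-- A Lyapunov function for the pivots at `Γ`. -/
def potential (Γ d : ℝ) : ℝ :=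
  d * (Γ - d) - Γ

theorem potential_le (Γ d : ℝ) : potential Γ d ≤ Γ ^ 2 / 4 - Γ := by
  rw [potential]
  nlinarith [sq_nonneg (d - Γ / 2)]

theorem potential_le_mul_potential {d : ℝ} {n : ℕ} (hd : 0 < d) (hdΓ : d * (Γ - 1) ≤ 2 * Γ) :
    potential Γ (Γ - n - Γ / d) ≤ Γ / d ^ 2 * potential Γ d := by
  have hpotential : Γ / d ^ 2 * potential Γ d = potential Γ (Γ - Γ / d) := by
    simp only [potential]
    field_simp
    ring
  have hdiff : potential Γ (Γ - Γ / d) - potential Γ (Γ - n - Γ / d) =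
      n * (n - 1 + (2 * (Γ / d) - (Γ - 1))) := by
    simp only [potential]
    ring
  have hlower : Γ - 1 ≤ 2 * (Γ / d) := by
    rw [← mul_div_assoc, le_div_iff₀ hd]
    linarith
  rw [hpotential, ← sub_nonneg, hdiff]
  rcases n.eq_zero_or_pos with rfl | hn
  · simp
  · have hn : (1 : ℝ) ≤ n := by exact_mod_cast hn
    exact mul_nonneg n.cast_nonneg (by linarith)

theorem pivot_gap_succ_ge {k : ℕ} (hgΓ : g ≤ Γ) (hd : 0 < pivot N Γ k) (hdΓ : pivot N Γ k ≤ Γ)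
    (hd' : 0 < pivot N g k) (hgap : Γ - g ≤ pivot N Γ k - pivot N g k) :
    Γ - g ≤ pivot N Γ (k + 1) - pivot N g (k + 1) ∧
      (Γ - g) * (1 - 1 / pivot N Γ k) + Γ / pivot N Γ k ^ 2 * (pivot N Γ k - pivot N g k) ≤
        pivot N Γ (k + 1) - pivot N g (k + 1) := by
  simp only [pivot]
  set d := pivot N Γ k
  set d' := pivot N g k
  have hexcess : 0 ≤ Γ * (d - d') - (Γ - g) * d := by nlinarith
  have hsucc : Γ - N (k + 1) - Γ / d - (g - N (k + 1) - g / d') =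
      Γ - g + (Γ * (d - d') - (Γ - g) * d) / (d * d') := by
    field_simp
    ring
  have hlinear : (Γ - g) * (1 - 1 / d) + Γ / d ^ 2 * (d - d') =
      Γ - g + (Γ * (d - d') - (Γ - g) * d) / (d * d) := by
    field_simp
    ring
  have hdd' : d * d' ≤ d * d := by gcongr; linarith
  rw [hsucc, hlinear]
  exact ⟨le_add_of_nonneg_right (by positivity),
    add_le_add_right (div_le_div_of_nonneg_left hexcess (by positivity) hdd') _⟩

theorem le_pivot_gap (hgΓ : g ≤ Γ) (hd : ∀ k, 0 < pivot N Γ k) (hdΓ : ∀ k, pivot N Γ k ≤ Γ)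
    (hd' : ∀ k, 0 < pivot N g k) (k : ℕ) : Γ - g ≤ pivot N Γ k - pivot N g k := by
  induction k with
  | zero => simp [pivot]
  | succ k ih => exact (pivot_gap_succ_ge hgΓ (hd k) (hdΓ k) (hd' k) ih).1

theorem div_mul_natCast_mul_le {e φ r : ℕ → ℝ} {c H : ℝ} (hc : 0 ≤ c) (hH : 0 < H)
    (hr : ∀ k, 0 ≤ r k) (hφH : ∀ k, φ k ≤ H) (hφ : ∀ k, φ (k + 1) ≤ r k * φ k) (he₀ : 0 ≤ e 0)
    (he : ∀ k, c + r k * e k ≤ e (k + 1)) (k : ℕ) : c / H * k * φ k ≤ e k := by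
  induction k with
  | zero => simpa using he₀
  | succ k ih =>
    have hr := hr k
    calc c / H * (k + 1 : ℕ) * φ (k + 1) = c / H * φ (k + 1) + c / H * k * φ (k + 1) := by
          push_cast
          ring
      _ ≤ c / H * H + c / H * k * (r k * φ k) := by
          gcongr
          exacts [hφH _, hφ k]
      _ = c + r k * (c / H * k * φ k) := by
          rw [div_mul_cancel₀ _ hH.ne']
          ring
      _ ≤ c + r k * e k := by gcongr
      _ ≤ e (k + 1) := he k

/-- At `Γ` the potential is multiplied by at most `Γ / d ^ 2` in each step, and the gap between the
pivots at `Γ` and at `g` is multiplied by at least as much; as the gap also gains a constant in each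
step, its ratio to the potential would grow linearly. -/
theorem exists_pivot_nonpos {α m : ℝ} (hα : 1 < α) (hαΓ : (α + 1) * (Γ - 1) ≤ 2 * Γ)
    (hΓ : 4 < Γ) (hgΓ : g < Γ) (hN : ∀ k, pivot N Γ k ∈ Set.Ico α (α + 1)) (hm : 0 < m)
    (hpotential : ∀ d ∈ Set.Ico α (α + 1), m ≤ potential Γ d) : ∃ k, pivot N g k ≤ 0 := by
  by_contra! hd'
  have hd (k : ℕ) : 0 < pivot N Γ k := by linarith [(hN k).1]
  have hdΓ (k : ℕ) : pivot N Γ k * (Γ - 1) ≤ 2 * Γ := by nlinarith [(hN k).2]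
  have hgap := le_pivot_gap hgΓ.le hd (fun k => by nlinarith [hd k, hdΓ k]) hd'
  set c := (Γ - g) * (1 - 1 / α) with hc_def
  set H := Γ ^ 2 / 4 - Γ with hH_def
  have hc : 0 < c := mul_pos (sub_pos.mpr hgΓ) (sub_pos.mpr ((div_lt_one (by linarith)).mpr hα))
  have hH : 0 < H := by nlinarith
  have hgap_succ (k : ℕ) : c + Γ / pivot N Γ k ^ 2 * (pivot N Γ k - pivot N g k) ≤
      pivot N Γ (k + 1) - pivot N g (k + 1) := by
    refine le_trans ?_ (pivot_gap_succ_ge hgΓ.le (hd k) (by nlinarith [hd k, hdΓ k]) (hd' k)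
      (hgap k)).2
    have := (hN k).1
    have : 0 ≤ Γ - g := by linarith
    rw [hc_def]
    gcongr
  have hgrowth := div_mul_natCast_mul_le (e := fun k => pivot N Γ k - pivot N g k)
    (φ := fun k => potential Γ (pivot N Γ k)) (r := fun k => Γ / pivot N Γ k ^ 2)
    hc.le hH (fun k => by positivity) (fun k => potential_le _ _)
    (fun k => potential_le_mul_potential (hd k) (hdΓ k)) (by linarith [hgap 0]) hgap_succ
  obtain ⟨k, hk⟩ := exists_nat_gt ((α + 1) / (c / H * m))
  rw [div_lt_iff₀ (by positivity)] at hk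
  have hle : c / H * k * m ≤ pivot N Γ k - pivot N g k :=
    le_trans (by gcongr; exact hpotential _ (hN k)) (hgrowth k)
  linarith [(hN k).2, hd' k]

end Divergence

/-- The leaf numbers are chosen greedily at `x = Γ`, that is, as large as possible while keeping all
pivots at least `α = (Γ + 1) / (Γ - 1)`. -/
theorem exists_caterpillarFactor_ne_top_and_eq_top {γ Γ : ℝ} (hγ : 2 + Real.sqrt 5 ≤ γ)
    (hγΓ : γ < Γ) :
    ∃ N : ℕ → ℕ, (∀ k, caterpillarFactor N (ENNReal.ofReal Γ⁻¹) k ≠ ⊤) ∧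
      ∃ k, caterpillarFactor N (ENNReal.ofReal γ⁻¹) k = ⊤ := by
  have hsqrt : 2 < Real.sqrt 5 := Real.lt_sqrt_of_sq_lt (by norm_num)
  have hΓ : 4 < Γ := by linarith
  have hquad : 0 < Γ ^ 2 - 4 * Γ - 1 := by
    nlinarith [Real.sq_sqrt (show (0 : ℝ) ≤ 5 by norm_num)]
  obtain ⟨α, hα⟩ : ∃ α, α * (Γ - 1) = Γ + 1 :=
    ⟨(Γ + 1) / (Γ - 1), div_mul_cancel₀ _ (by linarith)⟩
  have hα_one : 1 < α := by nlinarith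
  have hαΓ : 2 * α + 1 ≤ Γ := by nlinarith
  have hpotential_pos : 0 < potential Γ α := by
    have hsq : (Γ - 1) ^ 2 * potential Γ α = Γ ^ 2 - 4 * Γ - 1 := by
      rw [potential]
      linear_combination (Γ * (Γ - 1) - α * (Γ - 1) - (Γ + 1)) * hα
    exact pos_of_mul_pos_right (hsq ▸ hquad) (sq_nonneg _)
  have hpotential_ge (d : ℝ) (hd : d ∈ Set.Ico α (α + 1)) : potential Γ α ≤ potential Γ d := by
    rw [← sub_nonneg, show potential Γ d - potential Γ α = (d - α) * (Γ - α - d) by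
      simp only [potential]; ring]
    exact mul_nonneg (by linarith [hd.1]) (by linarith [hd.2])
  obtain ⟨N, hN⟩ := exists_forall_pivot_mem_Ico (α := α) (x := Γ) (by linarith) (by linarith)
    (by linarith) (by rw [potential] at hpotential_pos; linarith)
  obtain ⟨k, hk⟩ := exists_pivot_nonpos hα_one (by linarith) hΓ hγΓ hN hpotential_pos hpotential_ge
  exact ⟨N, caterpillarFactor_ne_top (by linarith) fun k => by linarith [(hN k).1],
    exists_caterpillarFactor_eq_top (by linarith) hk⟩

section GrowthRates

theorem exists_growthRate_cellMatrix {E : Type*} [Fintype E] {t u : ℕ} {col : E → Fin t}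
    {row : E → Fin u} (hinj : Function.Injective fun e => (col e, row e)) {γ Γ : ℝ} (hΓ : 0 < Γ)
    (hconv : generatingSeries (cellWeight col row) (ENNReal.ofReal Γ⁻¹) ≠ ⊤)
    (hdiv : generatingSeries (cellWeight col row) (ENNReal.ofReal γ⁻¹) = ⊤) :
    ∃ L ∈ Set.Icc γ Γ, Tendsto (fun n : ℕ => (gridCount (cellMatrix col row) n : ℝ) ^ (1 / (n : ℝ)))
      atTop (nhds L) :=
  exists_growthRate_mem_Icc (cellWeight_pos col row) (cellWeight_mul_le col row)
    (cellWeight_le_gridCount hinj) gridCount_le_sum_cellWeight hΓ hconv hdiv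

/-- The `0/1` matrix of a set of cells, after numbering its columns and rows. -/
def RootedCells.matrix (G : RootedCells) :
    Fin (Fintype.card G.Col) → Fin (Fintype.card G.Row) → ℤ :=
  cellMatrix (Fintype.equivFin G.Col ∘ G.col) (Fintype.equivFin G.Row ∘ G.row)

theorem RootedCells.exists_growthRate_matrix (G : RootedCells) {γ Γ : ℝ} (hΓ : 0 < Γ)
    (hconv : generatingSeries (cellWeight G.col G.row) (ENNReal.ofReal Γ⁻¹) ≠ ⊤)
    (hdiv : generatingSeries (cellWeight G.col G.row) (ENNReal.ofReal γ⁻¹) = ⊤) :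
    ∃ L ∈ Set.Icc γ Γ, Tendsto (fun n : ℕ => (gridCount G.matrix n : ℝ) ^ (1 / (n : ℝ)))
      atTop (nhds L) := by
  have hweight : cellWeight (Fintype.equivFin G.Col ∘ G.col) (Fintype.equivFin G.Row ∘ G.row) =
      cellWeight G.col G.row := by
    ext a
    simp only [cellWeight, fiberMultinomial_comp_of_injective (Equiv.injective _)]
  refine exists_growthRate_cellMatrix (fun e e' h => G.injective ?_) hΓ (hweight ▸ hconv)
    (hweight ▸ hdiv)
  simpa using h

end GrowthRates

/-- For every `γ ≥ 2 + √5` and `ε > 0` there is a monotone grid class whose growth rate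
exists and lies within `ε` of `γ`. -/
theorem grid_growth_rates_dense (γ : ℝ) (hγ : 2 + Real.sqrt 5 ≤ γ) (ε : ℝ) (hε : 0 < ε) :
    ∃ (t u : ℕ), 1 ≤ t ∧ 1 ≤ u ∧
      ∃ M : Fin t → Fin u → ℤ,
        (∀ i j, M i j = 0 ∨ M i j = 1 ∨ M i j = -1) ∧
        ∃ g : ℝ,
          Tendsto (fun n : ℕ => (gridCount M n : ℝ) ^ (1 / (n : ℝ))) atTop (nhds g) ∧
          |g - γ| < ε := by
  have hΓ : 0 < γ + ε / 2 := by linarith [Real.sqrt_nonneg 5]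
  obtain ⟨N, hconv, k, hdiv⟩ :=
    exists_caterpillarFactor_ne_top_and_eq_top hγ (show γ < γ + ε / 2 by linarith)
  let G := caterpillar N k
  have hG_conv : generatingSeries (cellWeight G.col G.row) (ENNReal.ofReal (γ + ε / 2)⁻¹) ≠ ⊤ := by
    rw [generatingSeries_cellWeight_caterpillar]
    exact ENNReal.prod_ne_top fun i _ => hconv i
  have hG_div : generatingSeries (cellWeight G.col G.row) (ENNReal.ofReal γ⁻¹) = ⊤ := by
    rw [generatingSeries_cellWeight_caterpillar, Finset.prod_range_succ, hdiv]
    exact ENNReal.mul_top (Finset.prod_ne_zero_iff.mpr fun i _ => caterpillarFactor_ne_zero _ _ i)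
  have : Nonempty G.Col := ⟨G.root⟩
  have : Nonempty G.Row := (nonempty_of_generatingSeries_eq_top hG_div).map G.row
  obtain ⟨L, ⟨hγL, hLΓ⟩, hL⟩ := G.exists_growthRate_matrix hΓ hG_conv hG_div
  refine ⟨_, _, Fintype.card_pos, Fintype.card_pos, G.matrix, fun i j => ?_, L, hL, ?_⟩
  · exact (cellMatrix_eq_zero_or_eq_one i j).imp_right Or.inl
  · exact abs_lt.mpr ⟨by linarith, by linarith⟩
end
end

section
/- Let M be a matrix with t ≥ 1 columns and u ≥ 1 rows and entries in {0, 1, −1}. Then the matching polynomial of the row-column graph G(M^{×2}) of the double refinement of M has a greatest real root μ, and the limit lim_{n→∞} |Geom_n(M)|^{1/n} exists and equals μ². -/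
noncomputable section

open Filter

open scoped Classical

/-- The standard figure `Λ_M ⊆ ℝ²` of a 0/±1 matrix `M`: a union of open oblique line
segments, one for each nonzero cell, with slope given by the entry. -/
def stdFigure {t u : ℕ} (M : Fin t → Fin u → ℤ) : Set (ℝ × ℝ) :=
  {p : ℝ × ℝ | ∃ (i : Fin t) (j : Fin u) (s : ℝ), 0 < s ∧ s < 1 ∧
    ((M i j = 1 ∧ p = (((i : ℕ) : ℝ) + s, ((j : ℕ) : ℝ) + s)) ∨
      (M i j = -1 ∧ p = (((i : ℕ) : ℝ) + s, ((j : ℕ) : ℝ) + 1 - s)))}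

/-- Membership in the geometric grid class `Geom(M)`: the permutation can be plotted on the
standard figure of `M`. -/
def InGeomClass {t u : ℕ} (M : Fin t → Fin u → ℤ) {n : ℕ} (σ : Equiv.Perm (Fin n)) : Prop :=
  ∃ f : Fin n → ℝ × ℝ, (∀ p, f p ∈ stdFigure M) ∧
    (∀ a b : Fin n, a < b → (f a).1 < (f b).1) ∧
    ∀ a b : Fin n, (f a).2 < (f b).2 ↔ σ a < σ b

/-- `|Geom_n(M)|`, the number of permutations of length `n` in the geometric grid class. -/
def geomCount {t u : ℕ} (M : Fin t → Fin u → ℤ) (n : ℕ) : ℕ :=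
  Nat.card {σ : Equiv.Perm (Fin n) // InGeomClass M σ}

/-- The double refinement `M^{×2}` of `M`: replace each entry by a 2×2 block; `1` becomes the
block with 1s in the lower-left and upper-right cells, `-1` the block with -1s in the
upper-left and lower-right cells. -/
def doubleRefine {t u : ℕ} (M : Fin t → Fin u → ℤ) : Fin (2 * t) → Fin (2 * u) → ℤ :=
  fun i j =>
    if M ⟨(i : ℕ) / 2, by have := i.isLt; omega⟩ ⟨(j : ℕ) / 2, by have := j.isLt; omega⟩
        = 1 then
      (if (i : ℕ) % 2 = (j : ℕ) % 2 then 1 else 0)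
    else if M ⟨(i : ℕ) / 2, by have := i.isLt; omega⟩ ⟨(j : ℕ) / 2, by have := j.isLt; omega⟩
        = -1 then
      (if (i : ℕ) % 2 = (j : ℕ) % 2 then 0 else -1)
    else 0

/-- The row-column graph `G(M)`. -/
def rowColGraph {t u : ℕ} (M : Fin t → Fin u → ℤ) : SimpleGraph (Fin t ⊕ Fin u) :=
  SimpleGraph.fromRel fun x y =>
    ∃ (i : Fin t) (j : Fin u), x = Sum.inl i ∧ y = Sum.inr j ∧ M i j ≠ 0

/-- `m_k(G)`: the number of `k`-matchings of `G` (sets of `k` edges, pairwise disjoint). -/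
def matchingNumber {V : Type*} [Fintype V] [DecidableEq V] (G : SimpleGraph V) (k : ℕ) : ℕ :=
  Nat.card {s : Finset (Sym2 V) // s.card = k ∧ (∀ e ∈ s, e ∈ G.edgeSet) ∧
    ∀ e ∈ s, ∀ f ∈ s, e ≠ f → ∀ v : V, ¬(v ∈ e ∧ v ∈ f)}

/-- The matching polynomial `μ_G(z) = Σ_k (-1)^k m_k(G) z^(n-2k)`. -/
def matchingPoly {V : Type*} [Fintype V] [DecidableEq V] (G : SimpleGraph V) : Polynomial ℝ :=
  ∑ k ∈ Finset.range (Fintype.card V / 2 + 1),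
    Polynomial.C ((-1 : ℝ) ^ k * (matchingNumber G k : ℝ)) *
      Polynomial.X ^ (Fintype.card V - 2 * k)

/-
The permutations in `Geom_n(M)` are those plotted by words of length `n` over the nonzero cells of
`M^{×2}`: every nonzero refined cell has a base point, and the letters of the word are the cells of
the points, in order of their distance from the base points. Two words have the same gridded
permutation exactly when they differ by commutations of cells that share neither a row nor a column,
and a permutation has only polynomially many griddings, so the growth rate is that of the number of
traces (words up to such commutations). By Cartier and Foata the generating function of the traces
is the inverse of `∑ (-1)^k m_k z^k`, where `m_k` counts the sets of `k` pairwise commuting cells,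
that is, the `k`-matchings of the row-column graph. Its least positive root is the inverse of the
growth rate, and `z = x⁻²` turns it into the greatest root `x` of the matching polynomial.
-/

section Traces

open Finset

variable {E V : Type*} {loc : E → Set V} {n : ℕ}

/-- The trace of a word whose letters `e` are located at the sets `loc e`, encoded as the family of
its projections: for each `v`, the subword formed by the letters located at `v`. -/
def traceOf (loc : E → Set V) (w : Fin n → E) : V → List E :=
  fun v => (List.ofFn w).filter fun e => v ∈ loc e

/-- Equivalence of words up to commutation of letters with disjoint locations, encoded by the
permutation that takes the positions in one word to the positions in the other. -/
def TraceEquiv (loc : E → Set V) (w w' : Fin n → E) : Prop :=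
  ∃ θ : Equiv.Perm (Fin n), (∀ i, w' (θ i) = w i) ∧
    ∀ i j, ¬Disjoint (loc (w i)) (loc (w j)) → (i < j ↔ θ i < θ j)

theorem TraceEquiv.trans {w₁ w₂ w₃ : Fin n → E} (h : TraceEquiv loc w₁ w₂)
    (h' : TraceEquiv loc w₂ w₃) : TraceEquiv loc w₁ w₃ := by
  obtain ⟨θ, hθ, hθ_lt⟩ := h
  obtain ⟨φ, hφ, hφ_lt⟩ := h'
  refine ⟨φ * θ, fun i => (hφ (θ i)).trans (hθ i), fun i j hij => (hθ_lt i j hij).trans ?_⟩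
  exact hφ_lt _ _ (by rwa [hθ, hθ])

theorem TraceEquiv.cons {w w' : Fin n → E} (h : TraceEquiv loc w w') (e : E) :
    TraceEquiv loc (Fin.cons e w : Fin (n + 1) → E) (Fin.cons e w') := by
  obtain ⟨θ, hθ, hθ_lt⟩ := h
  refine ⟨Equiv.Perm.decomposeFin.symm (0, θ), fun i => ?_, fun i j => ?_⟩
  · cases i using Fin.cases <;> simp [hθ]
  · cases i using Fin.cases <;> cases j using Fin.cases
    case succ.succ i j => simpa using hθ_lt i j
    all_goals simp

theorem TraceEquiv.cons_removeNth {w : Fin (n + 1) → E} {p : Fin (n + 1)}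
    (hp : ∀ j < p, Disjoint (loc (w p)) (loc (w j))) :
    TraceEquiv loc (Fin.cons (w p) (p.removeNth w)) w := by
  have not_lt_of_not_disjoint {i : Fin n} (h : ¬Disjoint (loc (w p)) (loc (w (p.succAbove i)))) :
      p < p.succAbove i :=
    (not_lt.1 fun hlt => h (hp _ hlt)).lt_of_ne (Fin.succAbove_ne p i).symm
  refine ⟨p.cycleRange.symm, fun i => ?_, fun i j => ?_⟩
  · cases i using Fin.cases <;> simp [Fin.removeNth]
  · cases i using Fin.cases with
    | zero =>
      cases j using Fin.cases with
      | zero => simp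
      | succ j => simpa [Fin.removeNth] using not_lt_of_not_disjoint
    | succ i =>
      cases j using Fin.cases with
      | zero =>
        simpa [Fin.removeNth, disjoint_comm] using fun h => (not_lt_of_not_disjoint h).le
      | succ j => simp

theorem TraceEquiv.traceOf_eq {w w' : Fin n → E} (h : TraceEquiv loc w w') :
    traceOf loc w = traceOf loc w' := by
  obtain ⟨θ, hθ, hθ_lt⟩ := h
  let positions (u : Fin n → E) (v : V) : List (Fin n) :=
    (List.finRange n).filter fun i => v ∈ loc (u i)
  have traceOf_eq_map (u : Fin n → E) (v : V) : traceOf loc u v = (positions u v).map u := by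
    simp only [traceOf, positions, List.ofFn_eq_map, List.filter_map, Function.comp_def]
  have sorted (u : Fin n → E) (v : V) : (positions u v).Pairwise (· < ·) :=
    (List.pairwise_lt_finRange n).filter _
  have sorted_map (v : V) : ((positions w v).map θ).Pairwise (· < ·) := by
    refine List.pairwise_map.2 ((sorted w v).imp_of_mem fun {i j} hi hj hij => ?_)
    simp only [positions, List.mem_filter, decide_eq_true_eq] at hi hj
    exact (hθ_lt i j (Set.not_disjoint_iff.2 ⟨v, hi.2, hj.2⟩)).1 hij
  have positions_map (v : V) : (positions w v).map θ = positions w' v := by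
    refine List.Perm.eq_of_pairwise' ((sorted_map v).imp le_of_lt) ((sorted w' v).imp le_of_lt) ?_
    rw [List.perm_ext_iff_of_nodup ((sorted_map v).imp ne_of_lt) ((sorted w' v).imp ne_of_lt)]
    intro i
    simp only [positions, List.mem_map, List.mem_filter, List.mem_finRange, true_and,
      decide_eq_true_eq]
    exact ⟨by rintro ⟨j, hj, rfl⟩; rwa [hθ],
      fun hi => ⟨θ.symm i, by rwa [← hθ, θ.apply_symm_apply], θ.apply_symm_apply i⟩⟩
  funext v
  rw [traceOf_eq_map, traceOf_eq_map, ← positions_map, List.map_map]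
  exact List.map_congr_left fun i _ => (hθ i).symm

/-- Left multiplication of a trace by a letter. -/
def consTrace (loc : E → Set V) (e : E) (ρ : V → List E) : V → List E :=
  fun v => if v ∈ loc e then e :: ρ v else ρ v

theorem traceOf_cons (e : E) (w : Fin n → E) :
    traceOf loc (Fin.cons e w : Fin (n + 1) → E) = consTrace loc e (traceOf loc w) := by
  funext v
  simp [traceOf, consTrace, List.filter_cons]

theorem traceOf_append {m : ℕ} (w : Fin m → E) (w' : Fin n → E) :
    traceOf loc (Fin.append w w') = fun v => traceOf loc w v ++ traceOf loc w' v := by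
  funext v
  simp only [traceOf, List.ofFn_fin_append, List.filter_append]

theorem consTrace_injective (e : E) : Function.Injective (consTrace loc e) := by
  intro ρ ρ' h
  funext v
  have hv := congrFun h v
  unfold consTrace at hv
  split_ifs at hv
  · exact List.tail_eq_of_cons_eq hv
  · exact hv

/-- The letter `e` can be moved to the front of the words with trace `ρ`. -/
def IsInitialLetter (loc : E → Set V) (ρ : V → List E) (e : E) : Prop :=
  ∀ v ∈ loc e, (ρ v).head? = some e

theorem isInitialLetter_consTrace_self (e : E) (ρ : V → List E) :
    IsInitialLetter loc (consTrace loc e ρ) e := by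
  intro v hv
  simp [consTrace, hv]

theorem isInitialLetter_consTrace_iff {e f : E} (h : Disjoint (loc e) (loc f)) (ρ : V → List E) :
    IsInitialLetter loc (consTrace loc e ρ) f ↔ IsInitialLetter loc ρ f := by
  refine forall₂_congr fun v hv => ?_
  rw [consTrace, if_neg (h.notMem_of_mem_right hv)]

theorem IsInitialLetter.disjoint {ρ : V → List E} {e f : E} (he : IsInitialLetter loc ρ e)
    (hf : IsInitialLetter loc ρ f) (hef : e ≠ f) : Disjoint (loc e) (loc f) :=
  Set.disjoint_left.2 fun v hve hvf => hef (Option.some.inj ((he v hve).symm.trans (hf v hvf)))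

theorem IsInitialLetter.exists_first_occurrence {w : Fin n → E} {e : E}
    (h : IsInitialLetter loc (traceOf loc w) e) (he : (loc e).Nonempty) :
    ∃ p, w p = e ∧ ∀ j < p, Disjoint (loc e) (loc (w j)) := by
  have first_at {v : V} (hv : v ∈ loc e) : ∃ i, w i = e ∧ ∀ j < i, v ∉ loc (w j) := by
    have hhead := h v hv
    rw [traceOf, List.head?_filter, List.find?_eq_some_iff_getElem] at hhead
    obtain ⟨-, i, hi, hwi, hbefore⟩ := hhead
    have hin : i < n := by simpa using hi
    exact ⟨⟨i, hin⟩, by simpa using hwi, fun j hj => by simpa using hbefore j hj⟩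
  obtain ⟨v₀, hv₀⟩ := he
  obtain ⟨i₀, hi₀, -⟩ := first_at hv₀
  obtain ⟨p, hp, hmin⟩ := WellFounded.has_min (wellFounded_lt (α := Fin n))
    {i | ¬Disjoint (loc e) (loc (w i))} ⟨i₀, Set.not_disjoint_iff.2 ⟨v₀, hv₀, hi₀ ▸ hv₀⟩⟩
  obtain ⟨v, hve, hvp⟩ := Set.not_disjoint_iff.1 hp
  obtain ⟨i, hi, hbefore⟩ := first_at hve
  have hip : i = p := by
    refine le_antisymm (not_lt.1 fun hpi => hbefore p hpi hvp) (not_lt.1 (hmin i ?_))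
    exact Set.not_disjoint_iff.2 ⟨v, hve, hi ▸ hve⟩
  exact ⟨p, hip ▸ hi, fun j hj => not_not.1 fun hd => hmin j hd hj⟩

theorem IsInitialLetter.exists_traceEquiv_cons {w : Fin (n + 1) → E} {e : E}
    (h : IsInitialLetter loc (traceOf loc w) e) (he : (loc e).Nonempty) :
    ∃ u : Fin n → E, TraceEquiv loc (Fin.cons e u) w := by
  obtain ⟨p, rfl, hp⟩ := h.exists_first_occurrence he
  exact ⟨p.removeNth w, .cons_removeNth hp⟩

theorem traceOf_eq_iff (hloc : ∀ e, (loc e).Nonempty) {w w' : Fin n → E} :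
    traceOf loc w = traceOf loc w' ↔ TraceEquiv loc w w' := by
  refine ⟨fun h => ?_, TraceEquiv.traceOf_eq⟩
  induction n with
  | zero => exact ⟨1, fun i => i.elim0, fun i => i.elim0⟩
  | succ n ih =>
    obtain ⟨e, u, rfl⟩ : ∃ e u, w = Fin.cons e u := ⟨w 0, Fin.tail w, (Fin.cons_self_tail w).symm⟩
    have he : IsInitialLetter loc (traceOf loc w') e := by
      rw [← h, traceOf_cons]
      exact isInitialLetter_consTrace_self e _
    obtain ⟨u', hu'⟩ := he.exists_traceEquiv_cons (hloc e)
    have huu' : traceOf loc u = traceOf loc u' := by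
      apply consTrace_injective (loc := loc) e
      rw [← traceOf_cons, ← traceOf_cons, h, hu'.traceOf_eq]
    exact ((ih huu').cons e).trans hu'

variable [Fintype E]

/-- The traces of the words of length `n`. -/
def traces (loc : E → Set V) (n : ℕ) : Finset (V → List E) :=
  univ.image fun w : Fin n → E => traceOf loc w

theorem mem_traces {ρ : V → List E} : ρ ∈ traces loc n ↔ ∃ w : Fin n → E, traceOf loc w = ρ := by
  simp [traces]

theorem card_traces_add_le (loc : E → Set V) (m n : ℕ) :
    #(traces loc (m + n)) ≤ #(traces loc m) * #(traces loc n) := by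
  rw [← card_product]
  refine (card_le_card fun ρ hρ => ?_).trans
    (card_image_le (f := fun p : (V → List E) × (V → List E) => fun v => p.1 v ++ p.2 v))
  obtain ⟨w, rfl⟩ := mem_traces.1 hρ
  rw [← Fin.append_castAdd_natAdd (f := w), traceOf_append]
  exact mem_image.2 ⟨(_, _), mem_product.2 ⟨mem_traces.2 ⟨_, rfl⟩, mem_traces.2 ⟨_, rfl⟩⟩, rfl⟩

theorem card_traces_pos [Nonempty E] (loc : E → Set V) (n : ℕ) : 0 < #(traces loc n) :=
  card_pos.2 (univ_nonempty.image _)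

theorem card_traces_zero (loc : E → Set V) : #(traces loc 0) = 1 := by
  rw [traces, univ_unique, image_singleton, card_singleton]

theorem card_traces_of_isEmpty [IsEmpty E] (loc : E → Set V) (hn : n ≠ 0) :
    #(traces loc n) = 0 := by
  have : Nonempty (Fin n) := ⟨⟨0, Nat.pos_of_ne_zero hn⟩⟩
  rw [traces, univ_eq_empty, image_empty, card_empty]

/-- The letters with which a trace can begin. -/
def initialLetters (loc : E → Set V) (ρ : V → List E) : Finset E :=
  univ.filter (IsInitialLetter loc ρ)

theorem mem_initialLetters {ρ : V → List E} {e : E} :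
    e ∈ initialLetters loc ρ ↔ IsInitialLetter loc ρ e := by
  simp [initialLetters]

theorem pairwiseDisjoint_initialLetters (ρ : V → List E) :
    (initialLetters loc ρ : Set E).PairwiseDisjoint loc := fun _ he _ hf =>
  (mem_initialLetters.1 he).disjoint (mem_initialLetters.1 hf)

theorem initialLetters_traceOf_eq_empty_iff (hloc : ∀ e, (loc e).Nonempty) (w : Fin n → E) :
    initialLetters loc (traceOf loc w) = ∅ ↔ n = 0 := by
  simp only [eq_empty_iff_forall_notMem, mem_initialLetters]
  constructor
  · intro h
    by_contra hn
    obtain ⟨m, rfl⟩ := Nat.exists_eq_succ_of_ne_zero hn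
    apply h (w 0)
    rw [← Fin.cons_self_tail w, traceOf_cons]
    exact isInitialLetter_consTrace_self _ _
  · rintro rfl e he
    obtain ⟨p, -⟩ := he.exists_first_occurrence (hloc e)
    exact p.elim0

/-- The traces of length `n` that can begin with every letter of `S`. -/
def tracesBeginning (loc : E → Set V) (n : ℕ) (S : Finset E) : Finset (V → List E) :=
  (traces loc n).filter fun ρ => S ⊆ initialLetters loc ρ

theorem mem_tracesBeginning {S : Finset E} {ρ : V → List E} : ρ ∈ tracesBeginning loc n S ↔
    (∃ w : Fin n → E, traceOf loc w = ρ) ∧ ∀ e ∈ S, IsInitialLetter loc ρ e := by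
  simp [tracesBeginning, mem_traces, subset_iff, mem_initialLetters]

theorem card_tracesBeginning_insert (hloc : ∀ e, (loc e).Nonempty) {S : Finset E} {e : E}
    (he : ∀ f ∈ S, Disjoint (loc e) (loc f)) :
    #(tracesBeginning loc (n + 1) (insert e S)) = #(tracesBeginning loc n S) := by
  rw [← card_image_of_injective (tracesBeginning loc n S) (consTrace_injective (loc := loc) e)]
  congr 1
  ext ρ
  simp only [mem_image, mem_tracesBeginning, forall_mem_insert]
  constructor
  · rintro ⟨⟨w, rfl⟩, hwe, hwS⟩
    obtain ⟨u, hu⟩ := hwe.exists_traceEquiv_cons (hloc e)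
    have huw : consTrace loc e (traceOf loc u) = traceOf loc w := by
      rw [← traceOf_cons, hu.traceOf_eq]
    refine ⟨_, ⟨⟨u, rfl⟩, fun f hf => ?_⟩, huw⟩
    rw [← isInitialLetter_consTrace_iff (he f hf), huw]
    exact hwS f hf
  · rintro ⟨_, ⟨⟨u, rfl⟩, hu⟩, rfl⟩
    exact ⟨⟨Fin.cons e u, traceOf_cons e u⟩, isInitialLetter_consTrace_self e _,
      fun f hf => (isInitialLetter_consTrace_iff (he f hf) _).2 (hu f hf)⟩

theorem card_tracesBeginning_of_pairwiseDisjoint (hloc : ∀ e, (loc e).Nonempty) {S : Finset E}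
    (hS : (S : Set E).PairwiseDisjoint loc) (n : ℕ) :
    #(tracesBeginning loc n S) = if #S ≤ n then #(traces loc (n - #S)) else 0 := by
  induction S using Finset.induction_on generalizing n with
  | empty => simp [tracesBeginning]
  | insert e S he ih =>
    rw [coe_insert, Set.pairwiseDisjoint_insert_of_notMem (mod_cast he)] at hS
    rw [card_insert_of_notMem he]
    cases n with
    | zero =>
      rw [if_neg (Nat.not_succ_le_zero _), card_eq_zero, eq_empty_iff_forall_notMem]
      intro ρ hρ
      obtain ⟨⟨w, rfl⟩, hw⟩ := mem_tracesBeginning.1 hρ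
      have hempty := (initialLetters_traceOf_eq_empty_iff hloc w).2 rfl
      exact eq_empty_iff_forall_notMem.1 hempty e
        (mem_initialLetters.2 (hw e (mem_insert_self e S)))
    | succ n =>
      rw [card_tracesBeginning_insert hloc hS.2, ih hS.1]
      simp only [Nat.add_le_add_iff_right, Nat.add_sub_add_right]

theorem card_tracesBeginning_of_not_pairwiseDisjoint {S : Finset E}
    (hS : ¬(S : Set E).PairwiseDisjoint loc) (n : ℕ) : #(tracesBeginning loc n S) = 0 :=
  card_eq_zero.2 <| filter_eq_empty_iff.2 fun ρ _ hρ =>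
    hS ((pairwiseDisjoint_initialLetters ρ).subset (coe_subset.2 hρ))

/-- The finite sets of pairwise commuting letters. -/
def cliques (loc : E → Set V) : Finset (Finset E) :=
  univ.filter fun S => (S : Set E).PairwiseDisjoint loc

theorem mem_cliques {S : Finset E} : S ∈ cliques loc ↔ (S : Set E).PairwiseDisjoint loc := by
  simp [cliques]

theorem sum_cliques_neg_one_pow_card_mul_card_traces (hloc : ∀ e, (loc e).Nonempty) (n : ℕ) :
    ∑ S ∈ cliques loc, (-1 : ℤ) ^ #S * ((if #S ≤ n then #(traces loc (n - #S)) else 0 : ℕ) : ℤ) =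
      if n = 0 then 1 else 0 := by
  calc
    _ = ∑ S ∈ cliques loc, (-1 : ℤ) ^ #S * #(tracesBeginning loc n S) :=
      sum_congr rfl fun S hS => by
        rw [card_tracesBeginning_of_pairwiseDisjoint hloc (mem_cliques.1 hS)]
    _ = ∑ S : Finset E, (-1 : ℤ) ^ #S * #(tracesBeginning loc n S) :=
      sum_subset (subset_univ _) fun S _ hS => by
        rw [card_tracesBeginning_of_not_pairwiseDisjoint (mt mem_cliques.2 hS),
          Nat.cast_zero, mul_zero]
    _ = ∑ ρ ∈ traces loc n, ∑ S ∈ (initialLetters loc ρ).powerset, (-1 : ℤ) ^ #S := by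
      simp only [← nsmul_eq_mul', ← sum_const]
      exact sum_comm' fun S ρ => by simp [tracesBeginning, and_comm]
    _ = ∑ ρ ∈ traces loc n, if n = 0 then 1 else 0 := sum_congr rfl fun ρ hρ => by
      obtain ⟨w, rfl⟩ := mem_traces.1 hρ
      rw [sum_powerset_neg_one_pow_card]
      simp only [initialLetters_traceOf_eq_empty_iff hloc w]
    _ = if n = 0 then 1 else 0 := by
      split_ifs with hn
      · subst hn
        simp [card_traces_zero]
      · simp

end Traces

section GrowthRate

open Finset Topology Polynomial

theorem exists_tendsto_rpow_of_submultiplicative {a : ℕ → ℝ} (one_le : ∀ n, 1 ≤ a n)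
    (map_add_le : ∀ m n, a (m + n) ≤ a m * a n) :
    ∃ L, 0 < L ∧ (∀ n, L ^ n ≤ a n) ∧
      Tendsto (fun n : ℕ => a n ^ (1 / (n : ℝ))) atTop (𝓝 L) := by
  have pos (n : ℕ) : 0 < a n := one_pos.trans_le (one_le n)
  have subadditive : Subadditive fun n => Real.log (a n) := fun m n => by
    rw [← Real.log_mul (pos m).ne' (pos n).ne']
    exact Real.log_le_log (pos _) (map_add_le m n)
  have bddBelow : BddBelow (Set.range fun n : ℕ => Real.log (a n) / n) := by
    refine ⟨0, ?_⟩
    rintro _ ⟨n, rfl⟩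
    exact div_nonneg (Real.log_nonneg (one_le n)) n.cast_nonneg
  refine ⟨Real.exp subadditive.lim, Real.exp_pos _, fun n => ?_, ?_⟩
  · rcases eq_or_ne n 0 with rfl | hn
    · simpa using one_le 0
    · rw [← Real.exp_nat_mul, ← Real.le_log_iff_exp_le (pos n),
        ← le_div_iff₀' (by exact_mod_cast Nat.pos_of_ne_zero hn)]
      exact subadditive.lim_le_div bddBelow hn
  · refine ((Real.continuous_exp.tendsto _).comp (subadditive.tendsto_lim bddBelow)).congr
      fun n => ?_
    rw [Function.comp_apply, Real.rpow_def_of_pos (pos n), mul_one_div]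

theorem summable_mul_pow_of_tendsto_rpow {a : ℕ → ℝ} (nonneg : ∀ n, 0 ≤ a n) {L : ℝ}
    (hlim : Tendsto (fun n : ℕ => a n ^ (1 / (n : ℝ))) atTop (𝓝 L)) {x : ℝ} (hx : 0 < x)
    (hLx : L * x < 1) : Summable fun n => a n * x ^ n := by
  obtain ⟨r, hLr, hrx⟩ := exists_between ((lt_div_iff₀ hx).2 hLx)
  have root_nonneg (n : ℕ) : 0 ≤ a n ^ (1 / (n : ℝ)) := Real.rpow_nonneg (nonneg n) _
  have hr : 0 < r := (ge_of_tendsto' hlim root_nonneg).trans_lt hLr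
  refine .of_norm_bounded_eventually_nat (g := fun n => (r * x) ^ n)
    (summable_geometric_of_lt_one (by positivity) ((lt_div_iff₀ hx).1 hrx)) ?_
  filter_upwards [hlim.eventually_lt_const hLr, eventually_ne_atTop 0] with n hlt hn
  have a_le : a n ≤ r ^ n := by
    simpa only [one_div, Real.rpow_inv_natCast_pow (nonneg n) hn] using
      pow_le_pow_left₀ (root_nonneg n) hlt.le n
  rw [Real.norm_of_nonneg (mul_nonneg (nonneg n) (by positivity)), mul_pow]
  exact mul_le_mul_of_nonneg_right a_le (by positivity)

theorem tsum_mul_eval_eq_one {a : ℕ → ℝ} {p : ℝ[X]} (h : PowerSeries.mk a * p = 1) {x : ℝ}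
    (hsum : Summable fun n => a n * x ^ n) : (∑' n, a n * x ^ n) * p.eval x = 1 := by
  have coeff_eq_zero {n : ℕ} (hn : n ∉ range (p.natDegree + 1)) : p.coeff n * x ^ n = 0 := by
    rw [coeff_eq_zero_of_natDegree_lt (by simpa using hn), zero_mul]
  have cauchy_product (n : ℕ) :
      ∑ kl ∈ antidiagonal n, a kl.1 * x ^ kl.1 * (p.coeff kl.2 * x ^ kl.2) =
        if n = 0 then 1 else 0 :=
    calc
      _ = (PowerSeries.mk a * p).coeff n * x ^ n := by
        rw [PowerSeries.coeff_mul, sum_mul]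
        refine sum_congr rfl fun kl hkl => ?_
        rw [← mem_antidiagonal.1 hkl, PowerSeries.coeff_mk, coeff_coe, pow_add]
        ring
      _ = _ := by
        rw [h, PowerSeries.coeff_one]
        split_ifs with hn <;> simp [hn]
  rw [eval_eq_sum_range, ← tsum_eq_sum (L := .unconditional ℕ) fun n => coeff_eq_zero,
    tsum_mul_tsum_eq_tsum_sum_antidiagonal_of_summable_norm hsum.norm
      (summable_of_ne_finset_zero fun n => coeff_eq_zero).norm]
  simp only [cauchy_product, tsum_ite_eq]

-- The power series with coefficients `a n` dominates the geometric series of `L * x`, so that its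
-- reciprocal `p` is squeezed to `0` as `x` increases to `L⁻¹`.
theorem eval_mem_Ioc_of_mk_mul_eq_one {a : ℕ → ℝ} {p : ℝ[X]} (h : PowerSeries.mk a * p = 1)
    {L : ℝ} (hL : 0 < L) (pow_le : ∀ n, L ^ n ≤ a n)
    (hlim : Tendsto (fun n : ℕ => a n ^ (1 / (n : ℝ))) atTop (𝓝 L)) {x : ℝ} (hx : 0 < x)
    (hxL : x < L⁻¹) : p.eval x ∈ Set.Ioc 0 (1 - L * x) := by
  have hLx : L * x < 1 := (lt_inv_mul_iff₀ hL).1 (by rwa [mul_one])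
  have hsum := summable_mul_pow_of_tendsto_rpow
    (fun n => (pow_nonneg hL.le n).trans (pow_le n)) hlim hx hLx
  have geometric_le : (1 - L * x)⁻¹ ≤ ∑' n, a n * x ^ n := by
    rw [← tsum_geometric_of_lt_one (by positivity) hLx]
    refine (summable_geometric_of_lt_one (by positivity) hLx).tsum_le_tsum (fun n => ?_) hsum
    rw [mul_pow]
    exact mul_le_mul_of_nonneg_right (pow_le n) (by positivity)
  have bound_pos : 0 < 1 - L * x := sub_pos.2 hLx
  rw [eq_inv_of_mul_eq_one_right (tsum_mul_eval_eq_one h hsum)]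
  exact ⟨inv_pos.2 ((inv_pos.2 bound_pos).trans_le geometric_le),
    inv_le_of_inv_le₀ bound_pos geometric_le⟩

theorem isLeast_pos_root_of_mk_mul_eq_one {a : ℕ → ℝ} {p : ℝ[X]} (h : PowerSeries.mk a * p = 1)
    {L : ℝ} (hL : 0 < L) (pow_le : ∀ n, L ^ n ≤ a n)
    (hlim : Tendsto (fun n : ℕ => a n ^ (1 / (n : ℝ))) atTop (𝓝 L)) :
    IsLeast {x | 0 < x ∧ p.IsRoot x} L⁻¹ := by
  have eval_mem {x : ℝ} (hx : x ∈ Set.Ioo 0 L⁻¹) : p.eval x ∈ Set.Ioc 0 (1 - L * x) :=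
    eval_mem_Ioc_of_mk_mul_eq_one h hL pow_le hlim hx.1 hx.2
  have near : ∀ᶠ x in 𝓝[<] L⁻¹, x ∈ Set.Ioo 0 L⁻¹ := Ioo_mem_nhdsLT (inv_pos.2 hL)
  have eval_tendsto : Tendsto p.eval (𝓝[<] L⁻¹) (𝓝 (p.eval L⁻¹)) :=
    p.continuous.continuousWithinAt
  refine ⟨⟨inv_pos.2 hL, le_antisymm ?_ ?_⟩, fun x ⟨hx, hroot⟩ =>
    not_lt.1 fun hxL => (eval_mem ⟨hx, hxL⟩).1.ne' hroot⟩
  · have bound_tendsto : Tendsto (fun x => 1 - L * x) (𝓝[<] L⁻¹) (𝓝 0) := by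
      have hcont : Continuous fun x => 1 - L * x := by fun_prop
      simpa [hL.ne'] using (hcont.tendsto L⁻¹).mono_left nhdsWithin_le_nhds
    exact le_of_tendsto_of_tendsto eval_tendsto bound_tendsto
      (near.mono fun x hx => (eval_mem hx).2)
  · exact ge_of_tendsto eval_tendsto (near.mono fun x hx => (eval_mem hx).1.le)

theorem tendsto_rpow_of_polynomially_comparable {a g : ℕ → ℝ} (nonneg : ∀ n, 0 ≤ g n)
    (le : ∀ n, g n ≤ a n) {K : ℕ} (le_mul : ∀ n, a n ≤ g n * ((n : ℝ) + 1) ^ K) {L : ℝ}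
    (hlim : Tendsto (fun n : ℕ => a n ^ (1 / (n : ℝ))) atTop (𝓝 L)) :
    Tendsto (fun n : ℕ => g n ^ (1 / (n : ℝ))) atTop (𝓝 L) := by
  have poly_tendsto : Tendsto (fun n : ℕ => (((n : ℝ) + 1) ^ K) ^ (1 / (n : ℝ))) atTop (𝓝 1) := by
    refine ((tendsto_rpow_div_mul_add (K : ℝ) 1 (-1) zero_ne_one).comp
      (tendsto_atTop_add_const_right atTop 1 tendsto_natCast_atTop_atTop)).congr fun n => ?_
    rw [Function.comp_apply, ← Real.rpow_natCast, ← Real.rpow_mul (by positivity)]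
    congr 1
    ring
  have quotient_tendsto := hlim.div poly_tendsto one_ne_zero
  rw [div_one] at quotient_tendsto
  refine tendsto_of_tendsto_of_tendsto_of_le_of_le quotient_tendsto hlim (fun n => ?_) fun n =>
    Real.rpow_le_rpow (nonneg n) (le n) (by positivity)
  rw [Pi.div_apply, div_le_iff₀ (by positivity), ← Real.mul_rpow (nonneg n) (by positivity)]
  exact Real.rpow_le_rpow ((nonneg n).trans (le n)) (le_mul n) (by positivity)

variable {E V : Type*} [Fintype E] {loc : E → Set V}

/-- The Möbius polynomial of the trace monoid: the inverse of its generating function. -/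
def moebiusPoly (loc : E → Set V) : ℝ[X] :=
  ∑ S ∈ cliques loc, (-X) ^ #S

theorem mk_card_traces_mul_moebiusPoly (hloc : ∀ e, (loc e).Nonempty) :
    PowerSeries.mk (fun n => (#(traces loc n) : ℝ)) * moebiusPoly loc = 1 := by
  ext n
  have h := congrArg (Int.cast (R := ℝ)) (sum_cliques_neg_one_pow_card_mul_card_traces hloc n)
  push_cast at h
  rw [PowerSeries.coeff_one, ← h, moebiusPoly, ← coeToPowerSeries.ringHom_apply, map_sum, mul_sum,
    map_sum]
  refine sum_congr rfl fun S _ => ?_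
  have neg_X_pow : (-X : ℝ[X]) ^ #S = C ((-1) ^ #S) * X ^ #S := by
    rw [neg_pow, C_pow, C_neg, C_1]
  rw [neg_X_pow, coeToPowerSeries.ringHom_apply, Polynomial.coe_mul, coe_C, Polynomial.coe_pow,
    coe_X, mul_left_comm, PowerSeries.coeff_C_mul, PowerSeries.coeff_mul_X_pow',
    PowerSeries.coeff_mk]

theorem exists_isLeast_root_moebiusPoly [Nonempty E] (hloc : ∀ e, (loc e).Nonempty) :
    ∃ L, 0 < L ∧ IsLeast {x | 0 < x ∧ (moebiusPoly loc).IsRoot x} L⁻¹ ∧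
      Tendsto (fun n : ℕ => (#(traces loc n) : ℝ) ^ (1 / (n : ℝ))) atTop (𝓝 L) := by
  obtain ⟨L, hL, pow_le, hlim⟩ := exists_tendsto_rpow_of_submultiplicative
    (a := fun n => #(traces loc n)) (fun n => by exact_mod_cast card_traces_pos loc n)
    (fun m n => by exact_mod_cast card_traces_add_le loc m n)
  exact ⟨L, hL, isLeast_pos_root_of_mk_mul_eq_one (mk_card_traces_mul_moebiusPoly hloc) hL pow_le
    hlim, hlim⟩

end GrowthRate

section Matchings

open Finset Topology Polynomial

variable {E V : Type*} {G : SimpleGraph V}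

/-- The location of an edge of `G`, given as a letter `e`: with its two endpoints as location, edges
commute exactly when they can belong to a common matching. -/
def endpoints (φ : E ≃ G.edgeSet) (e : E) : Set V :=
  {v | v ∈ (φ e : Sym2 V)}

theorem endpoints_nonempty (φ : E ≃ G.edgeSet) (e : E) : (endpoints φ e).Nonempty :=
  ⟨_, Sym2.out_fst_mem (φ e : Sym2 V)⟩

variable [Fintype E] [Fintype V]

theorem two_mul_card_le_of_mem_cliques {φ : E ≃ G.edgeSet} {S : Finset E}
    (hS : S ∈ cliques (endpoints φ)) : 2 * #S ≤ Fintype.card V := by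
  have card_toFinset (e : E) : #(φ e : Sym2 V).toFinset = 2 :=
    Sym2.card_toFinset_of_not_isDiag _ (G.not_isDiag_of_mem_edgeSet (φ e).2)
  have disjoint : (S : Set E).PairwiseDisjoint fun e => (φ e : Sym2 V).toFinset :=
    fun e he f hf hef => by
      have h := Set.disjoint_left.1 (mem_cliques.1 hS he hf hef)
      exact disjoint_left.2 fun v hve hvf => h (Sym2.mem_toFinset.1 hve) (Sym2.mem_toFinset.1 hvf)
  calc
    2 * #S = #(S.biUnion fun e => (φ e : Sym2 V).toFinset) := by
      rw [card_biUnion disjoint, sum_congr rfl fun e _ => card_toFinset e, sum_const, smul_eq_mul,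
        mul_comm]
    _ ≤ Fintype.card V := card_le_univ _

variable [DecidableEq V]

theorem matchingNumber_eq_card_cliques (φ : E ≃ G.edgeSet) (k : ℕ) :
    matchingNumber G k = #{S ∈ cliques (endpoints φ) | #S = k} := by
  let edge : E ↪ Sym2 V := φ.toEmbedding.trans (.subtype _)
  rw [matchingNumber, ← card_map (mapEmbedding edge).toEmbedding]
  refine Nat.subtype_card _ fun s => ?_
  simp only [Finset.mem_map, mem_filter, mem_cliques, Set.PairwiseDisjoint, Set.Pairwise,
    Function.onFun, Set.disjoint_left, RelEmbedding.coe_toEmbedding, mapEmbedding_apply, mem_coe]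
  constructor
  · rintro ⟨S, ⟨hS, rfl⟩, rfl⟩
    simp only [card_map, forall_mem_map, true_and]
    exact ⟨fun e _ => (φ e).2, fun e he f hf hef v hv =>
      hS he hf (fun h => hef (congrArg edge h)) hv.1 hv.2⟩
  · rintro ⟨rfl, hsub, hs⟩
    have subset_map : s ⊆ univ.map edge := fun e he =>
      Finset.mem_map.2 ⟨φ.symm ⟨e, hsub e he⟩, mem_univ _, by simp [edge]⟩
    obtain ⟨S, -, rfl⟩ := subset_map_iff.1 subset_map
    refine ⟨S, ⟨fun e he f hf hef v hve hvf => ?_, (card_map edge).symm⟩, rfl⟩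
    exact hs _ (mem_map_of_mem edge he) _ (mem_map_of_mem edge hf) (edge.injective.ne hef) v
      ⟨hve, hvf⟩

theorem matchingPoly_eq_sum_cliques (φ : E ≃ G.edgeSet) :
    matchingPoly G =
      ∑ S ∈ cliques (endpoints φ), C ((-1) ^ #S) * X ^ (Fintype.card V - 2 * #S) := by
  have card_mem (S) (hS : S ∈ cliques (endpoints φ)) : #S ∈ range (Fintype.card V / 2 + 1) := by
    have := two_mul_card_le_of_mem_cliques hS
    rw [mem_range]
    omega
  rw [matchingPoly, ← sum_fiberwise_of_maps_to card_mem]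
  refine sum_congr rfl fun k _ => ?_
  rw [matchingNumber_eq_card_cliques φ, card_eq_sum_ones, Nat.cast_sum, mul_sum, map_sum, sum_mul]
  refine sum_congr rfl fun S hS => ?_
  rw [(mem_filter.1 hS).2, Nat.cast_one, mul_one]

theorem eval_matchingPoly (φ : E ≃ G.edgeSet) {x : ℝ} (hx : x ≠ 0) :
    (matchingPoly G).eval x =
      x ^ Fintype.card V * (moebiusPoly (endpoints φ)).eval (x ^ 2)⁻¹ := by
  rw [matchingPoly_eq_sum_cliques φ, moebiusPoly, eval_finsetSum, eval_finsetSum, mul_sum]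
  refine sum_congr rfl fun S hS => ?_
  rw [eval_mul, eval_C, eval_pow, eval_X, eval_pow, eval_neg, eval_X, neg_pow _⁻¹,
    pow_sub₀ _ hx (two_mul_card_le_of_mem_cliques hS), pow_mul, inv_pow (x ^ 2), mul_left_comm]

theorem isGreatest_root_matchingPoly (φ : E ≃ G.edgeSet) {L : ℝ} (hL : 0 < L)
    (h : IsLeast {x | 0 < x ∧ (moebiusPoly (endpoints φ)).IsRoot x} L⁻¹) :
    IsGreatest {x | (matchingPoly G).IsRoot x} √L := by
  refine ⟨?_, fun x hx => ?_⟩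
  · rw [Set.mem_ofPred_eq, IsRoot, eval_matchingPoly φ (Real.sqrt_pos.2 hL).ne',
      Real.sq_sqrt hL.le, h.1.2.eq_zero, mul_zero]
  · rcases le_or_gt x 0 with hx0 | hx0
    · exact hx0.trans (Real.sqrt_nonneg L)
    · rw [Set.mem_ofPred_eq, IsRoot, eval_matchingPoly φ hx0.ne'] at hx
      have hroot := (mul_eq_zero.1 hx).resolve_left (pow_pos hx0 _).ne'
      exact Real.le_sqrt_of_sq_le ((inv_le_inv₀ hL (by positivity)).1 (h.2 ⟨by positivity, hroot⟩))

theorem matchingPoly_of_isEmpty_edgeSet [IsEmpty G.edgeSet] :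
    matchingPoly G = X ^ Fintype.card V := by
  have cliques_eq : cliques (endpoints (.refl G.edgeSet)) = {∅} := by
    ext S
    simp [mem_cliques, eq_empty_of_isEmpty S]
  simp [matchingPoly_eq_sum_cliques (.refl G.edgeSet), cliques_eq]

theorem exists_isGreatest_root_matchingPoly [Nonempty V] (φ : E ≃ G.edgeSet) :
    ∃ μ : ℝ, IsGreatest {x | (matchingPoly G).IsRoot x} μ ∧
      Tendsto (fun n : ℕ => (#(traces (endpoints φ) n) : ℝ) ^ (1 / (n : ℝ))) atTop
        (𝓝 (μ ^ 2)) := by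
  rcases isEmpty_or_nonempty E with hE | hE
  · refine ⟨0, ?_, tendsto_const_nhds.congr' ?_⟩
    · have := φ.symm.isEmpty
      simp [matchingPoly_of_isEmpty_edgeSet, IsRoot]
    · filter_upwards [eventually_ne_atTop 0] with n hn
      have : (1 : ℝ) / n ≠ 0 := by positivity
      rw [card_traces_of_isEmpty _ hn, Nat.cast_zero, Real.zero_rpow this, zero_pow two_ne_zero]
  · obtain ⟨L, hL, hleast, hlim⟩ := exists_isLeast_root_moebiusPoly (endpoints_nonempty φ)
    exact ⟨√L, isGreatest_root_matchingPoly φ hL hleast, by rwa [Real.sq_sqrt hL.le]⟩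

end Matchings

section Rank

variable {α : Type*} [LinearOrder α] {n : ℕ} {f : Fin n → α}

/-- The relative order of the entries of an injective tuple, as a permutation: `f` increases along
`(rank f)⁻¹`. -/
def rank (f : Fin n → α) : Equiv.Perm (Fin n) :=
  (Tuple.sort f)⁻¹

theorem rank_lt_rank_iff (hf : Function.Injective f) {i j : Fin n} :
    rank f i < rank f j ↔ f i < f j := by
  have strictMono : StrictMono (f ∘ Tuple.sort f) :=
    (Tuple.monotone_sort f).strictMono_of_injective (hf.comp (Tuple.sort f).injective)
  simpa [rank] using (strictMono.lt_iff_lt (a := rank f i) (b := rank f j)).symm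

theorem rank_eq_iff (hf : Function.Injective f) {π : Equiv.Perm (Fin n)} :
    rank f = π ↔ ∀ i j, f i < f j ↔ π i < π j := by
  refine ⟨fun h i j => by rw [← h, rank_lt_rank_iff hf], fun h => ?_⟩
  have strictMono : StrictMono (π * (rank f)⁻¹) := fun i j hij => by
    rw [Equiv.Perm.mul_apply, Equiv.Perm.mul_apply, ← h, ← rank_lt_rank_iff hf]
    simpa using hij
  exact (mul_inv_eq_one.1 ((Equiv.Perm.monotone_iff _).1 strictMono.monotone)).symm

theorem rank_comp_perm (hf : Function.Injective f) (θ : Equiv.Perm (Fin n)) :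
    rank (f ∘ θ) = rank f * θ :=
  (rank_eq_iff (hf.comp θ.injective)).2 fun _ _ => (rank_lt_rank_iff hf).symm

theorem inGeomClass_iff_exists_points {t u : ℕ} {M : Fin t → Fin u → ℤ}
    {σ : Equiv.Perm (Fin n)} :
    InGeomClass M σ ↔ ∃ x y : Fin n → ℝ, (∀ k, (x k, y k) ∈ stdFigure M) ∧
      Function.Injective x ∧ Function.Injective y ∧ σ * rank x = rank y := by
  constructor
  · rintro ⟨f, hf, hx, hy⟩
    have x_strictMono : StrictMono fun k => (f k).1 := fun a b => hx a b
    have y_injective : Function.Injective fun k => (f k).2 := fun a b hab => by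
      apply σ.injective
      by_contra hne
      rcases lt_or_gt_of_ne hne with h | h
      · exact ((hy a b).2 h).ne hab
      · exact ((hy b a).2 h).ne hab.symm
    refine ⟨_, _, hf, x_strictMono.injective, y_injective, ?_⟩
    rw [(rank_eq_iff x_strictMono.injective (π := 1)).2 fun _ _ => x_strictMono.lt_iff_lt,
      (rank_eq_iff y_injective).2 hy, mul_one]
  · rintro ⟨x, y, hmem, hx, hy, hσ⟩
    refine ⟨fun a => (x ((rank x)⁻¹ a), y ((rank x)⁻¹ a)), fun a => hmem _, fun a b hab => ?_,
      fun a b => ?_⟩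
    · rw [← rank_lt_rank_iff hx]
      simpa using hab
    · simp [← rank_lt_rank_iff hy, ← hσ]

end Rank

section Strips

variable {n m : ℕ} {c c' : Fin n → Fin m}

/-- The key by which points are sorted along an axis, where the `k`-th point in order of distance
from the base point of its refined cell lies in the strip `c k`: strips of even index are oriented
away from the origin, those of odd index towards it. -/
def stripKey (c : Fin n → Fin m) (k : Fin n) : Fin m ×ₗ ℤ :=
  toLex (c k, if Even (c k : ℕ) then (k : ℤ) else -(k : ℤ))

theorem stripKey_lt_iff {k k' : Fin n} : stripKey c k < stripKey c k' ↔
    c k < c k' ∨ c k = c k' ∧ if Even (c k : ℕ) then k < k' else k' < k := by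
  rw [stripKey, stripKey, Prod.Lex.toLex_lt_toLex]
  refine or_congr_right (and_congr_right fun (h : c k = c k') => ?_)
  dsimp only
  rw [← h]
  split_ifs <;> simp

theorem stripKey_injective (c : Fin n → Fin m) : Function.Injective (stripKey c) := by
  intro k k' h
  obtain ⟨hc, hk⟩ := Prod.ext_iff.1 (toLex_inj.1 h)
  dsimp only at hc hk
  rw [hc] at hk
  split_ifs at hk <;> exact Fin.ext (by omega)

/-- The positions along an axis of points of which the `k`-th, in order of distance from the base
point of its refined cell, lies in the strip `c k`. -/
def stripRank (c : Fin n → Fin m) : Equiv.Perm (Fin n) :=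
  rank (stripKey c)

theorem monotone_comp_stripRank_inv (c : Fin n → Fin m) :
    Monotone (c ∘ ⇑(stripRank c)⁻¹) := by
  have h := Tuple.monotone_sort (stripKey c)
  rw [stripRank, rank, inv_inv]
  exact fun i j hij => Prod.Lex.monotone_fst_ofLex (h hij)

theorem stripRank_mul_eq_iff {θ : Equiv.Perm (Fin n)} (hθ : ∀ k, c' (θ k) = c k) :
    stripRank c' * θ = stripRank c ↔ ∀ k k', c k = c k' → (k < k' ↔ θ k < θ k') := by
  rw [eq_comm, stripRank, rank_eq_iff (stripKey_injective c)]
  simp only [Equiv.Perm.mul_apply, stripRank, rank_lt_rank_iff (stripKey_injective c'),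
    stripKey_lt_iff, hθ]
  refine ⟨fun h k k' hc => ?_, fun h k k' => or_congr_right (and_congr_right fun hc => ?_)⟩
  · have hkk' := h k k'
    have hk'k := h k' k
    simp only [hc, lt_self_iff_false, true_and, false_or] at hkk' hk'k
    split_ifs at hkk' hk'k
    · exact hkk'
    · exact hk'k
  · split_ifs
    · exact h k k' hc
    · exact h k' k hc.symm

/-- The coordinate of the points at distance `d` from the base point of a refined cell, in a strip
of even (`Even a`) or odd index, relative to the lower end of the unrefined strip. -/
def stripOffset (a : ℕ) (d : ℝ) : ℝ :=
  if Even a then d / 2 else 1 - d / 2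

/-- The coordinate of the points at distance `d` from the base point of a refined cell, in the
refined strip of index `a`. Refined strips have width `1 / 2`, and distances are measured so that a
refined cell has diameter `1`. -/
def stripCoord (a : ℕ) (d : ℝ) : ℝ :=
  (a / 2 : ℕ) + stripOffset a d

theorem stripOffset_mem_Ioo {a : ℕ} {d : ℝ} (hd : d ∈ Set.Ioc 0 1) :
    stripOffset a d ∈ Set.Ioo 0 1 := by
  obtain ⟨hd0, hd1⟩ := hd
  rw [stripOffset]
  split_ifs <;> constructor <;> linarith

theorem exists_stripOffset_eq {s : ℝ} (hs0 : 0 < s) (hs1 : s < 1) :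
    ∃ a < 2, ∃ d ∈ Set.Ioc (0 : ℝ) 1, stripOffset a d = s := by
  rcases le_total s (1 / 2) with hs | hs
  · exact ⟨0, by norm_num, 2 * s, ⟨by linarith, by linarith⟩, by simp [stripOffset]⟩
  · exact ⟨1, by norm_num, 2 * (1 - s), ⟨by linarith, by linarith⟩, by simp [stripOffset]⟩

theorem stripOffset_congr {a b : ℕ} (h : a % 2 = b % 2) (d : ℝ) :
    stripOffset a d = stripOffset b d := by
  simp only [stripOffset, Nat.even_iff, h]

theorem stripOffset_of_mod_ne {a b : ℕ} (h : a % 2 ≠ b % 2) (d : ℝ) :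
    stripOffset b d = 1 - stripOffset a d := by
  simp only [stripOffset, Nat.even_iff]
  split_ifs
  · omega
  · ring
  · ring
  · omega

theorem stripCoord_two_mul_add (i : ℕ) {a : ℕ} (ha : a < 2) (d : ℝ) :
    stripCoord (2 * i + a) d = i + stripOffset a d := by
  rw [stripCoord, stripOffset_congr (b := a) (by omega), show (2 * i + a) / 2 = i by omega]

theorem stripCoord_eq (a : ℕ) (d : ℝ) :
    stripCoord a d = if Even a then (a + d) / 2 else (a + 1 - d) / 2 := by
  rw [stripCoord, stripOffset]
  split_ifs with ha
  · obtain ⟨i, rfl⟩ := ha.two_dvd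
    rw [Nat.mul_div_cancel_left i two_pos]
    push_cast
    ring
  · obtain ⟨i, rfl⟩ := Nat.not_even_iff_odd.1 ha
    rw [show (2 * i + 1) / 2 = i by omega]
    push_cast
    ring

theorem stripCoord_lt_iff {d : Fin n → ℝ} (hd : ∀ k, d k ∈ Set.Ioc 0 1) (hmono : Monotone d)
    (hinj : Function.Injective fun k => stripCoord (c k) (d k)) (k k' : Fin n) :
    stripKey c k < stripKey c k' ↔ stripCoord (c k) (d k) < stripCoord (c k') (d k') := by
  have le_of_lt {k k' : Fin n} (h : stripKey c k < stripKey c k') :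
      stripCoord (c k) (d k) ≤ stripCoord (c k') (d k') := by
    obtain ⟨hk0, hk1⟩ := hd k
    obtain ⟨hk0', hk1'⟩ := hd k'
    rw [stripCoord_eq, stripCoord_eq]
    rcases stripKey_lt_iff.1 h with hlt | ⟨heq, hlt⟩
    · have : ((c k : ℕ) : ℝ) + 1 ≤ (c k' : ℕ) := by exact_mod_cast hlt
      split_ifs <;> linarith
    · rw [← heq]
      split_ifs at hlt ⊢
      all_goals linarith [hmono hlt.le]
  constructor
  · exact fun h => (le_of_lt h).lt_of_ne fun he => h.ne (congrArg _ (hinj he))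
  · refine fun h => not_le.1 fun hle => ?_
    rcases hle.eq_or_lt with he | hlt
    · exact h.ne (by rw [stripKey_injective c he])
    · exact (le_of_lt hlt).not_gt h

theorem rank_stripCoord {d : Fin n → ℝ} (hd : ∀ k, d k ∈ Set.Ioc 0 1) (hmono : Monotone d)
    (hinj : Function.Injective fun k => stripCoord (c k) (d k)) :
    rank (fun k => stripCoord (c k) (d k)) = stripRank c :=
  ((rank_eq_iff (stripKey_injective c)).2 fun k k' => by
    rw [stripCoord_lt_iff hd hmono hinj, rank_lt_rank_iff hinj]).symm

theorem eq_of_stripCoord_eq {a b : ℕ} {d d' : ℝ} (hd : d ∈ Set.Ioo 0 1) (hd' : d' ∈ Set.Ioo 0 1)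
    (h : stripCoord a d = stripCoord b d') : d = d' := by
  have floor_eq {a : ℕ} {d : ℝ} (hd : d ∈ Set.Ioo 0 1) : ⌊2 * stripCoord a d⌋₊ = a := by
    obtain ⟨hd0, hd1⟩ := hd
    rw [stripCoord_eq, Nat.floor_eq_iff (by split_ifs <;> linarith [a.cast_nonneg (α := ℝ)])]
    split_ifs <;> constructor <;> linarith
  obtain rfl : a = b :=
    (floor_eq hd).symm.trans ((congrArg (fun z => ⌊2 * z⌋₊) h).trans (floor_eq hd'))
  rw [stripCoord_eq, stripCoord_eq] at h
  split_ifs at h <;> linarith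

theorem exists_strictMono_Ioo (n : ℕ) :
    ∃ d : Fin n → ℝ, StrictMono d ∧ ∀ k, d k ∈ Set.Ioo (0 : ℝ) 1 := by
  refine ⟨fun k => ((k : ℕ) + 1 : ℝ) / (n + 1), fun k k' hk => ?_, fun k => ⟨by positivity, ?_⟩⟩
  · have : ((k : ℕ) : ℝ) < (k' : ℕ) := by exact_mod_cast hk
    dsimp only
    gcongr
  · have : ((k : ℕ) : ℝ) < n := by exact_mod_cast k.isLt
    rw [div_lt_one (by positivity)]
    linarith

end Strips

section Griddings

open Finset

variable {p q n : ℕ}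

/-- The nonzero cells of a matrix. -/
abbrev Cell (N : Fin p → Fin q → ℤ) : Type :=
  {x : Fin p × Fin q // N x.1 x.2 ≠ 0}

variable {N : Fin p → Fin q → ℤ}

/-- The column of a cell. -/
abbrev Cell.col (e : Cell N) : Fin p :=
  e.1.1

/-- The row of a cell. -/
abbrev Cell.row (e : Cell N) : Fin q :=
  e.1.2

/-- The edge of the row-column graph that joins the column and the row of a cell. -/
def Cell.edge (e : Cell N) : (rowColGraph N).edgeSet :=
  ⟨s(.inl e.col, .inr e.row), by
    rw [SimpleGraph.mem_edgeSet, rowColGraph, SimpleGraph.fromRel_adj]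
    exact ⟨Sum.inl_ne_inr, .inl ⟨_, _, rfl, rfl, e.2⟩⟩⟩

theorem Cell.edge_bijective : Function.Bijective (Cell.edge : Cell N → _) := by
  refine ⟨fun e f h => ?_, fun ⟨x, hx⟩ => ?_⟩
  · have h' := congrArg Subtype.val h
    simp only [Cell.edge, Sym2.eq_iff, Sum.inl.injEq, Sum.inr.injEq, reduceCtorEq, and_false,
      or_false] at h'
    exact Subtype.ext (Prod.ext h'.1 h'.2)
  · induction x with
    | _ a b =>
      rw [SimpleGraph.mem_edgeSet, rowColGraph, SimpleGraph.fromRel_adj] at hx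
      obtain ⟨-, ⟨i, j, rfl, rfl, h⟩ | ⟨i, j, rfl, rfl, h⟩⟩ := hx
      · exact ⟨⟨(i, j), h⟩, rfl⟩
      · exact ⟨⟨(i, j), h⟩, Subtype.ext Sym2.eq_swap⟩

/-- The nonzero cells of a matrix as the edges of its row-column graph. -/
def cellEquivEdgeSet (N : Fin p → Fin q → ℤ) : Cell N ≃ (rowColGraph N).edgeSet :=
  Equiv.ofBijective Cell.edge Cell.edge_bijective

theorem not_disjoint_endpoints_iff {e f : Cell N} :
    ¬Disjoint (endpoints (cellEquivEdgeSet N) e) (endpoints (cellEquivEdgeSet N) f) ↔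
      e.col = f.col ∨ e.row = f.row := by
  simp [Set.not_disjoint_iff, endpoints, cellEquivEdgeSet, Cell.edge]

/-- The permutation plotted by points of which the `k`-th, in order of distance from the base point
of its cell, lies in the cell `w k`. -/
def gridPerm (w : Fin n → Cell N) : Equiv.Perm (Fin n) :=
  stripRank (Cell.row ∘ w) * (stripRank (Cell.col ∘ w))⁻¹

theorem traceEquiv_iff {w w' : Fin n → Cell N} :
    TraceEquiv (endpoints (cellEquivEdgeSet N)) w w' ↔ ∃ θ : Equiv.Perm (Fin n),
      (∀ i, w' (θ i) = w i) ∧ stripRank (Cell.col ∘ w') * θ = stripRank (Cell.col ∘ w) ∧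
        stripRank (Cell.row ∘ w') * θ = stripRank (Cell.row ∘ w) := by
  refine exists_congr fun θ => and_congr_right fun hθ => ?_
  rw [stripRank_mul_eq_iff fun i => congrArg Cell.col (hθ i),
    stripRank_mul_eq_iff fun i => congrArg Cell.row (hθ i)]
  simp only [not_disjoint_endpoints_iff, or_imp, forall_and, Function.comp_apply]

theorem TraceEquiv.gridPerm_eq {w w' : Fin n → Cell N}
    (h : TraceEquiv (endpoints (cellEquivEdgeSet N)) w w') : gridPerm w = gridPerm w' := by
  obtain ⟨θ, -, hcol, hrow⟩ := traceEquiv_iff.1 h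
  rw [gridPerm, gridPerm, ← hcol, ← hrow, mul_inv_rev, mul_assoc, mul_inv_cancel_left]

/-- The rows and columns of the letters of `w`, each in increasing order. They record the grid lines
that separate the entries of `gridPerm w`. -/
def gridLines (w : Fin n → Cell N) : (Fin n → Fin p) × (Fin n → Fin q) :=
  (Cell.col ∘ w ∘ ⇑(stripRank (Cell.col ∘ w))⁻¹, Cell.row ∘ w ∘ ⇑(stripRank (Cell.row ∘ w))⁻¹)

theorem traceEquiv_of_gridPerm_eq {w w' : Fin n → Cell N} (hperm : gridPerm w = gridPerm w')
    (hlines : gridLines w = gridLines w') :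
    TraceEquiv (endpoints (cellEquivEdgeSet N)) w w' := by
  have hrow_eq : stripRank (Cell.row ∘ w') *
      ((stripRank (Cell.col ∘ w'))⁻¹ * stripRank (Cell.col ∘ w)) = stripRank (Cell.row ∘ w) := by
    rw [← mul_assoc, ← gridPerm, ← hperm, gridPerm, inv_mul_cancel_right]
  refine traceEquiv_iff.2
    ⟨(stripRank (Cell.col ∘ w'))⁻¹ * stripRank (Cell.col ∘ w), fun i => ?_, by simp, hrow_eq⟩
  refine Subtype.ext (Prod.ext ?_ ?_)
  · simpa [gridLines] using
      (congrFun (congrArg Prod.fst hlines) (stripRank (Cell.col ∘ w) i)).symm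
  · rw [eq_inv_mul_of_mul_eq hrow_eq]
    simpa [gridLines] using
      (congrFun (congrArg Prod.snd hlines) (stripRank (Cell.row ∘ w) i)).symm

theorem card_monotone_le (n m : ℕ) :
    #{f : Fin n → Fin m | Monotone f} ≤ (n + 1) ^ m := by
  let countLE (f : Fin n → Fin m) (a : Fin m) : Fin (n + 1) :=
    ⟨#{i | f i ≤ a}, Nat.lt_succ_of_le (card_finset_fin_le _)⟩
  have countLE_injOn : Set.InjOn countLE {f | Monotone f} := fun f hf g hg h => by
    have le_iff (j : Fin n) (a : Fin m) : f j ≤ a ↔ g j ≤ a := by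
      have hcard : #{i | f i ≤ a} = #{i | g i ≤ a} := congrArg Fin.val (congrFun h a)
      rw [← Tuple.lt_card_le_iff_apply_le_of_monotone hf,
        ← Tuple.lt_card_le_iff_apply_le_of_monotone hg, hcard]
    funext j
    exact eq_of_forall_ge_iff (le_iff j)
  calc
    _ ≤ #(univ : Finset (Fin m → Fin (n + 1))) :=
      card_le_card_of_injOn countLE (fun _ _ => mem_coe.2 (mem_univ _))
        (by simpa using countLE_injOn)
    _ = (n + 1) ^ m := by simp

theorem card_image_le_card_image {α β γ : Type*} {_ : DecidableEq β} {_ : DecidableEq γ}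
    {s : Finset α} {f : α → β} {g : α → γ} (h : ∀ a ∈ s, ∀ b ∈ s, g a = g b → f a = f b) :
    #(s.image f) ≤ #(s.image g) := by
  obtain ⟨r, hrs, hinj, himage⟩ := exists_subset_injOn_image_eq_of_surjOn (f := f) s (s.image f)
    (by rw [coe_image]; exact Set.surjOn_image f s)
  have g_injOn : Set.InjOn g r := fun a ha b hb hab => hinj ha hb (h a (hrs ha) b (hrs hb) hab)
  calc
    #(s.image f) ≤ #r := himage ▸ card_image_le
    _ = #(r.image g) := (card_image_of_injOn g_injOn).symm
    _ ≤ #(s.image g) := card_le_card (image_subset_image hrs)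

theorem card_image_gridPerm_le (N : Fin p → Fin q → ℤ) (n : ℕ) :
    #(univ.image fun w : Fin n → Cell N => gridPerm w) ≤
      #(traces (endpoints (cellEquivEdgeSet N)) n) :=
  card_image_le_card_image fun _ _ _ _ h =>
    ((traceOf_eq_iff (endpoints_nonempty _)).1 h).gridPerm_eq

theorem card_traces_le (N : Fin p → Fin q → ℤ) (n : ℕ) :
    #(traces (endpoints (cellEquivEdgeSet N)) n) ≤
      #(univ.image fun w : Fin n → Cell N => gridPerm w) * (n + 1) ^ (p + q) := by
  let monotoneMaps (m : ℕ) : Finset (Fin n → Fin m) := {f | Monotone f}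
  have gridLines_mem (w : Fin n → Cell N) :
      gridLines w ∈ monotoneMaps p ×ˢ monotoneMaps q := by
    simp only [monotoneMaps, mem_product, mem_filter, mem_univ, true_and]
    exact ⟨monotone_comp_stripRank_inv (Cell.col ∘ w), monotone_comp_stripRank_inv (Cell.row ∘ w)⟩
  calc
    _ ≤ #(univ.image fun w : Fin n → Cell N => (gridPerm w, gridLines w)) :=
      card_image_le_card_image fun w _ w' _ h =>
        (traceEquiv_of_gridPerm_eq (congrArg Prod.fst h) (congrArg Prod.snd h)).traceOf_eq
    _ ≤ #((univ.image fun w : Fin n → Cell N => gridPerm w) ×ˢ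
        (monotoneMaps p ×ˢ monotoneMaps q)) := by
      refine card_le_card (image_subset_iff.2 fun w _ => ?_)
      exact mem_product.2 ⟨mem_image_of_mem _ (mem_univ w), gridLines_mem w⟩
    _ ≤ #(univ.image fun w : Fin n → Cell N => gridPerm w) * (n + 1) ^ (p + q) := by
      rw [card_product, card_product, pow_add]
      gcongr <;> exact card_monotone_le n _

end Griddings

section Geometry

open Finset

variable {t u n : ℕ} {M : Fin t → Fin u → ℤ}

theorem doubleRefine_ne_zero_iff {i : Fin (2 * t)} {j : Fin (2 * u)} {i' : Fin t} {j' : Fin u}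
    (hi : (i : ℕ) / 2 = i') (hj : (j : ℕ) / 2 = j') : doubleRefine M i j ≠ 0 ↔
      M i' j' = 1 ∧ (i : ℕ) % 2 = (j : ℕ) % 2 ∨ M i' j' = -1 ∧ (i : ℕ) % 2 ≠ (j : ℕ) % 2 := by
  simp only [doubleRefine, hi, hj]
  split_ifs <;> simp_all

theorem mem_stdFigure_iff {P : ℝ × ℝ} : P ∈ stdFigure M ↔ ∃ e : Cell (doubleRefine M),
    ∃ d ∈ Set.Ioc (0 : ℝ) 1, P = (stripCoord e.col d, stripCoord e.row d) := by
  constructor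
  · rintro ⟨i, j, s, hs0, hs1, hP⟩
    obtain ⟨a, ha, d, hd, rfl⟩ := exists_stripOffset_eq hs0 hs1
    have hi : (2 * i + a) / 2 = (i : ℕ) := by omega
    rcases hP with ⟨hM, rfl⟩ | ⟨hM, rfl⟩
    · refine ⟨⟨(⟨2 * i + a, by omega⟩, ⟨2 * j + a, by omega⟩), ?_⟩, d, hd, ?_⟩
      · exact (doubleRefine_ne_zero_iff hi (by dsimp only; omega)).2 (.inl ⟨hM, by simp⟩)
      · rw [stripCoord_two_mul_add _ ha, stripCoord_two_mul_add _ ha]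
    · refine ⟨⟨(⟨2 * i + a, by omega⟩, ⟨2 * j + (1 - a), by omega⟩), ?_⟩, d, hd, ?_⟩
      · exact (doubleRefine_ne_zero_iff hi (by dsimp only; omega)).2
          (.inr ⟨hM, by dsimp only; omega⟩)
      · rw [stripCoord_two_mul_add _ ha, stripCoord_two_mul_add _ (by omega),
          stripOffset_of_mod_ne (a := a) (b := 1 - a) (by omega), add_sub_assoc]
  · rintro ⟨e, d, hd, rfl⟩
    have hs := stripOffset_mem_Ioo (a := e.col) hd
    refine ⟨⟨e.col / 2, by omega⟩, ⟨e.row / 2, by omega⟩, stripOffset e.col d, hs.1, hs.2, ?_⟩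
    rcases (doubleRefine_ne_zero_iff (i' := ⟨e.col / 2, by omega⟩)
      (j' := ⟨e.row / 2, by omega⟩) rfl rfl).1 e.2 with ⟨hM, hmod⟩ | ⟨hM, hmod⟩
    · exact .inl ⟨hM, by rw [stripCoord, stripCoord, stripOffset_congr hmod]⟩
    · exact .inr ⟨hM, by rw [stripCoord, stripCoord, stripOffset_of_mod_ne hmod, add_sub_assoc]⟩

theorem inGeomClass_iff {σ : Equiv.Perm (Fin n)} :
    InGeomClass M σ ↔ ∃ w : Fin n → Cell (doubleRefine M), gridPerm w = σ := by
  rw [inGeomClass_iff_exists_points]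
  constructor
  · rintro ⟨x, y, hmem, hx, hy, hσ⟩
    choose e d hd hP using fun k => mem_stdFigure_iff.1 (hmem k)
    obtain rfl : x = fun k => stripCoord (e k).col (d k) := funext fun k => congrArg Prod.fst (hP k)
    obtain rfl : y = fun k => stripCoord (e k).row (d k) := funext fun k => congrArg Prod.snd (hP k)
    let τ := Tuple.sort d
    have hcol := rank_stripCoord (fun k => hd (τ k)) (Tuple.monotone_sort d) (hx.comp τ.injective)
    have hrow := rank_stripCoord (fun k => hd (τ k)) (Tuple.monotone_sort d) (hy.comp τ.injective)
    refine ⟨e ∘ τ, ?_⟩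
    have hcol' : stripRank (Cell.col ∘ e ∘ τ) = rank _ * τ :=
      hcol.symm.trans (rank_comp_perm hx τ)
    have hrow' : stripRank (Cell.row ∘ e ∘ τ) = rank _ * τ :=
      hrow.symm.trans (rank_comp_perm hy τ)
    rw [gridPerm, hcol', hrow', ← hσ, mul_assoc σ, mul_inv_cancel_right]
  · rintro ⟨w, rfl⟩
    obtain ⟨d, hmono, hd⟩ := exists_strictMono_Ioo n
    have hx : Function.Injective fun k => stripCoord (w k).col (d k) := fun k k' h =>
      hmono.injective (eq_of_stripCoord_eq (hd k) (hd k') h)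
    have hy : Function.Injective fun k => stripCoord (w k).row (d k) := fun k k' h =>
      hmono.injective (eq_of_stripCoord_eq (hd k) (hd k') h)
    have hd' (k) := Set.Ioo_subset_Ioc_self (hd k)
    refine ⟨_, _, fun k => mem_stdFigure_iff.2 ⟨w k, d k, hd' k, rfl⟩, hx, hy, ?_⟩
    rw [rank_stripCoord hd' hmono.monotone hx, rank_stripCoord hd' hmono.monotone hy]
    exact inv_mul_cancel_right _ _

theorem geomCount_eq_card_image_gridPerm (M : Fin t → Fin u → ℤ) (n : ℕ) :
    geomCount M n = #(univ.image fun w : Fin n → Cell (doubleRefine M) => gridPerm w) :=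
  Nat.subtype_card _ fun σ => by simp [inGeomClass_iff]

end Geometry

/-- The matching polynomial of `G(M^{×2})` has a greatest real root `μ`, and the growth
rate of `Geom(M)` exists and equals `μ²`. -/
theorem geom_growth_rate {t u : ℕ} (ht : 1 ≤ t) (hu : 1 ≤ u)
    (M : Fin t → Fin u → ℤ) (hM : ∀ i j, M i j = 0 ∨ M i j = 1 ∨ M i j = -1) :
    ∃ μ : ℝ,
      IsGreatest {x : ℝ | (matchingPoly (rowColGraph (doubleRefine M))).IsRoot x} μ ∧
      Tendsto (fun n : ℕ => (geomCount M n : ℝ) ^ (1 / (n : ℝ))) atTop (nhds (μ ^ 2)) := by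
  have : Nonempty (Fin (2 * t) ⊕ Fin (2 * u)) := ⟨.inl ⟨0, by omega⟩⟩
  obtain ⟨μ, hroot, hlim⟩ := exists_isGreatest_root_matchingPoly (cellEquivEdgeSet (doubleRefine M))
  refine ⟨μ, hroot, tendsto_rpow_of_polynomially_comparable (K := 2 * t + 2 * u)
    (fun n => Nat.cast_nonneg _) (fun n => ?_) (fun n => ?_) hlim⟩
  · rw [geomCount_eq_card_image_gridPerm]
    exact_mod_cast card_image_gridPerm_le _ n
  · rw [geomCount_eq_card_image_gridPerm]
    exact_mod_cast card_traces_le _ n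
end
end
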